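/- arXiv:1601.07979 — 3 statements merged into one kernel-verified Lean document; each statement's English description precedes it below -/
import Mathlib

section
/- Let (H, α_H) be a Hom-bialgebra over a field k, n ∈ ℤ, and let Φ : H⊗H → H⊗H be the Hom-entwining map Φ(h⊗g) = α_H^{-1}(g₁) ⊗ α_H^{-1}(h) α_H^{n}(g₂). Let (U,α_U) be both a right H-Hom-module and a right H-Hom-comodule. Then U is an n-th Hom-entwined module for (H,H,Φ) if and only if ρ(u·h) = u₍₀₎·h₁ ⊗ u₍₁₎ h₂ for all u ∈ U, h ∈ H (i.e. U is a Hom-Hopf module over H). -/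
open TensorProduct BigOperators

noncomputable section

variable (k : Type*) [Field k]

section HomDefs

variable {A B C H U X Y Z : Type*}
variable [AddCommGroup A] [Module k A] [AddCommGroup B] [Module k B]
variable [AddCommGroup C] [Module k C] [AddCommGroup H] [Module k H]
variable [AddCommGroup U] [Module k U] [AddCommGroup X] [Module k X]
variable [AddCommGroup Y] [Module k Y] [AddCommGroup Z] [Module k Z]

/-- A Hom-algebra `(A, α, μ, e)` over `k`. -/
def IsHomAlgebra (α : A ≃ₗ[k] A) (μ : A →ₗ[k] A →ₗ[k] A) (e : A) : Prop :=
  (∀ a b, α (μ a b) = μ (α a) (α b)) ∧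
  (∀ a b c, μ (α a) (μ b c) = μ (μ a b) (α c)) ∧
  α e = e ∧ (∀ a, μ e a = α a) ∧ (∀ a, μ a e = α a)

/-- A Hom-coalgebra `(C, α, Δ, ε)` over `k`. -/
def IsHomCoalgebra (α : C ≃ₗ[k] C) (Δ : C →ₗ[k] C ⊗[k] C) (ε : C →ₗ[k] k) : Prop :=
  (∀ c, Δ (α c) = TensorProduct.map α.toLinearMap α.toLinearMap (Δ c)) ∧
  (∀ c, ε (α c) = ε c) ∧
  (∀ c, TensorProduct.map α.toLinearMap Δ (Δ c)
      = TensorProduct.assoc k C C C (TensorProduct.map Δ α.toLinearMap (Δ c))) ∧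
  (∀ c, TensorProduct.lid k C (TensorProduct.map ε (LinearMap.id : C →ₗ[k] C) (Δ c)) = α c) ∧
  (∀ c, TensorProduct.rid k C (TensorProduct.map (LinearMap.id : C →ₗ[k] C) ε (Δ c)) = α c)

/-- A Hom-bialgebra `(H, α, μ, e, Δ, ε)` over `k`. -/
def IsHomBialgebra (α : H ≃ₗ[k] H) (μ : H →ₗ[k] H →ₗ[k] H) (e : H)
    (Δ : H →ₗ[k] H ⊗[k] H) (ε : H →ₗ[k] k) : Prop :=
  IsHomAlgebra k α μ e ∧ IsHomCoalgebra k α Δ ε ∧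
  (∀ a b, Δ (μ a b) = TensorProduct.map (TensorProduct.lift μ) (TensorProduct.lift μ)
      (TensorProduct.tensorTensorTensorComm k H H H H (Δ a ⊗ₜ[k] Δ b))) ∧
  Δ e = e ⊗ₜ[k] e ∧
  (∀ a b, ε (μ a b) = ε a * ε b) ∧
  ε e = 1

/-- A right `A`-Hom-module `(U, αU, act)`. -/
def IsHomModule (αA : A ≃ₗ[k] A) (μ : A →ₗ[k] A →ₗ[k] A) (e : A)
    (αU : U ≃ₗ[k] U) (act : U →ₗ[k] A →ₗ[k] U) : Prop :=
  (∀ u a, αU (act u a) = act (αU u) (αA a)) ∧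
  (∀ u, act u e = αU u) ∧
  (∀ u a b, act (act u a) (αA b) = act (αU u) (μ a b))

/-- A right `H`-Hom-comodule `(U, αU, ρ)`. -/
def IsHomComodule (αH : H ≃ₗ[k] H) (Δ : H →ₗ[k] H ⊗[k] H) (ε : H →ₗ[k] k)
    (αU : U ≃ₗ[k] U) (ρ : U →ₗ[k] U ⊗[k] H) : Prop :=
  (∀ u, ρ (αU u) = TensorProduct.map αU.toLinearMap αH.toLinearMap (ρ u)) ∧
  (∀ u, TensorProduct.map αU.toLinearMap Δ (ρ u)
      = TensorProduct.assoc k U H H (TensorProduct.map ρ αH.toLinearMap (ρ u))) ∧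
  (∀ u, TensorProduct.rid k U (TensorProduct.map (LinearMap.id : U →ₗ[k] U) ε (ρ u)) = αU u)

/-- A Hom-cotwistor `φ : B ⊗ H → H ⊗ B` between Hom-coalgebras `B` and `H`
(conditions (M1)-(M4) together with compatibility with the structure maps). -/
def IsHomCotwistor (αB : B ≃ₗ[k] B) (ΔB : B →ₗ[k] B ⊗[k] B) (εB : B →ₗ[k] k)
    (αH : H ≃ₗ[k] H) (ΔH : H →ₗ[k] H ⊗[k] H) (εH : H →ₗ[k] k)
    (φ : B ⊗[k] H →ₗ[k] H ⊗[k] B) : Prop :=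
  (φ ∘ₗ TensorProduct.map αB.toLinearMap αH.toLinearMap
     = TensorProduct.map αH.toLinearMap αB.toLinearMap ∘ₗ φ) ∧
  -- (M1)
  (TensorProduct.map αH.toLinearMap ΔB ∘ₗ φ
     = (TensorProduct.assoc k H B B).toLinearMap
       ∘ₗ TensorProduct.map φ (LinearMap.id : B →ₗ[k] B)
       ∘ₗ (TensorProduct.assoc k B H B).symm.toLinearMap
       ∘ₗ TensorProduct.map (LinearMap.id : B →ₗ[k] B) φ
       ∘ₗ (TensorProduct.assoc k B B H).toLinearMap
       ∘ₗ TensorProduct.map ΔB αH.toLinearMap) ∧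
  -- (M2)
  (TensorProduct.map ΔH αB.toLinearMap ∘ₗ φ
     = (TensorProduct.assoc k H H B).symm.toLinearMap
       ∘ₗ TensorProduct.map (LinearMap.id : H →ₗ[k] H) φ
       ∘ₗ (TensorProduct.assoc k H B H).toLinearMap
       ∘ₗ TensorProduct.map φ (LinearMap.id : H →ₗ[k] H)
       ∘ₗ (TensorProduct.assoc k B H H).symm.toLinearMap
       ∘ₗ TensorProduct.map αB.toLinearMap ΔH) ∧
  -- (M3)
  ((TensorProduct.lid k B).toLinearMap
      ∘ₗ TensorProduct.map εH (LinearMap.id : B →ₗ[k] B) ∘ₗ φ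
     = (TensorProduct.rid k B).toLinearMap
        ∘ₗ TensorProduct.map (LinearMap.id : B →ₗ[k] B) εH) ∧
  -- (M4)
  ((TensorProduct.rid k H).toLinearMap
      ∘ₗ TensorProduct.map (LinearMap.id : H →ₗ[k] H) εB ∘ₗ φ
     = (TensorProduct.lid k H).toLinearMap
        ∘ₗ TensorProduct.map εB (LinearMap.id : H →ₗ[k] H))

/-- A monoidal Hom-cotwistor between Hom-bialgebras `B` and `H`:
a Hom-cotwistor additionally satisfying (M5) and (M6). -/
def IsMonoidalHomCotwistor (αB : B ≃ₗ[k] B) (μB : B →ₗ[k] B →ₗ[k] B) (eB : B)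
    (ΔB : B →ₗ[k] B ⊗[k] B) (εB : B →ₗ[k] k)
    (αH : H ≃ₗ[k] H) (μH : H →ₗ[k] H →ₗ[k] H) (eH : H)
    (ΔH : H →ₗ[k] H ⊗[k] H) (εH : H →ₗ[k] k)
    (φ : B ⊗[k] H →ₗ[k] H ⊗[k] B) : Prop :=
  IsHomCotwistor k αB ΔB εB αH ΔH εH φ ∧
  -- (M5)
  (TensorProduct.map (TensorProduct.lift μH) (TensorProduct.lift μB)
      ∘ₗ (TensorProduct.tensorTensorTensorComm k H B H B).toLinearMap
      ∘ₗ TensorProduct.map φ φ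
    = φ ∘ₗ TensorProduct.map (TensorProduct.lift μB) (TensorProduct.lift μH)
        ∘ₗ (TensorProduct.tensorTensorTensorComm k B H B H).toLinearMap) ∧
  -- (M6)
  φ (eB ⊗ₜ[k] eH) = eH ⊗ₜ[k] eB

/-- A Hom-entwining map `Φ : H ⊗ A → A ⊗ H` (conditions (E1)-(E4) together
with compatibility with the structure maps); `(H, A, Φ)` is then a
Hom-entwining structure. -/
def IsHomEntwining (αA : A ≃ₗ[k] A) (μ : A →ₗ[k] A →ₗ[k] A) (e : A)
    (αH : H ≃ₗ[k] H) (Δ : H →ₗ[k] H ⊗[k] H) (ε : H →ₗ[k] k)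
    (Φ : H ⊗[k] A →ₗ[k] A ⊗[k] H) : Prop :=
  (TensorProduct.map αA.toLinearMap αH.toLinearMap ∘ₗ Φ
     = Φ ∘ₗ TensorProduct.map αH.toLinearMap αA.toLinearMap) ∧
  -- (E1)
  (TensorProduct.map (TensorProduct.lift μ) αH.toLinearMap
      ∘ₗ (TensorProduct.assoc k A A H).symm.toLinearMap
      ∘ₗ TensorProduct.map (LinearMap.id : A →ₗ[k] A) Φ
      ∘ₗ (TensorProduct.assoc k A H A).toLinearMap
      ∘ₗ TensorProduct.map Φ (LinearMap.id : A →ₗ[k] A)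
    = Φ ∘ₗ TensorProduct.map αH.toLinearMap (TensorProduct.lift μ)
        ∘ₗ (TensorProduct.assoc k H A A).toLinearMap) ∧
  -- (E2)
  (TensorProduct.map αA.toLinearMap Δ ∘ₗ Φ
     = (TensorProduct.assoc k A H H).toLinearMap
       ∘ₗ TensorProduct.map Φ (LinearMap.id : H →ₗ[k] H)
       ∘ₗ (TensorProduct.assoc k H A H).symm.toLinearMap
       ∘ₗ TensorProduct.map (LinearMap.id : H →ₗ[k] H) Φ
       ∘ₗ (TensorProduct.assoc k H H A).toLinearMap
       ∘ₗ TensorProduct.map Δ αA.toLinearMap) ∧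
  -- (E3)
  ((TensorProduct.rid k A).toLinearMap
      ∘ₗ TensorProduct.map (LinearMap.id : A →ₗ[k] A) ε ∘ₗ Φ
     = (TensorProduct.lid k A).toLinearMap
        ∘ₗ TensorProduct.map ε (LinearMap.id : A →ₗ[k] A)) ∧
  -- (E4)
  (∀ h, Φ (h ⊗ₜ[k] e) = e ⊗ₜ[k] h)

/-- A Hom-monoidal entwining datum between Hom-bialgebras `H` (coalgebra side)
and `A` (algebra side): a Hom-entwining map additionally satisfying (E5), (E6). -/
def IsHomMonoidalEntwining (αA : A ≃ₗ[k] A) (μA : A →ₗ[k] A →ₗ[k] A) (eA : A)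
    (ΔA : A →ₗ[k] A ⊗[k] A) (εA : A →ₗ[k] k)
    (αH : H ≃ₗ[k] H) (μH : H →ₗ[k] H →ₗ[k] H) (eH : H)
    (ΔH : H →ₗ[k] H ⊗[k] H) (εH : H →ₗ[k] k)
    (Φ : H ⊗[k] A →ₗ[k] A ⊗[k] H) : Prop :=
  IsHomEntwining k αA μA eA αH ΔH εH Φ ∧
  -- (E5)
  (TensorProduct.map (LinearMap.id : A ⊗[k] A →ₗ[k] A ⊗[k] A) (TensorProduct.lift μH)
      ∘ₗ (TensorProduct.tensorTensorTensorComm k A H A H).toLinearMap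
      ∘ₗ TensorProduct.map Φ Φ
      ∘ₗ (TensorProduct.tensorTensorTensorComm k H H A A).toLinearMap
      ∘ₗ TensorProduct.map
           (TensorProduct.map (αH.toLinearMap ∘ₗ αH.toLinearMap)
             (αH.toLinearMap ∘ₗ αH.toLinearMap)) ΔA
    = TensorProduct.map ΔA (αH.toLinearMap ∘ₗ αH.toLinearMap)
        ∘ₗ Φ ∘ₗ TensorProduct.map (TensorProduct.lift μH) (LinearMap.id : A →ₗ[k] A)) ∧
  -- (E6)
  (∀ a, TensorProduct.lid k H
      (TensorProduct.map εA (LinearMap.id : H →ₗ[k] H) (Φ (eH ⊗ₜ[k] a))) = εA a • eH)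

/-- An `n`-th Hom-entwined module over a Hom-entwining structure `(H, A, Φ)`. -/
def IsHomEntwinedModule (αA : A ≃ₗ[k] A) (μ : A →ₗ[k] A →ₗ[k] A) (e : A)
    (αH : H ≃ₗ[k] H) (Δ : H →ₗ[k] H ⊗[k] H) (ε : H →ₗ[k] k)
    (Φ : H ⊗[k] A →ₗ[k] A ⊗[k] H) (n : ℤ)
    (αU : U ≃ₗ[k] U) (act : U →ₗ[k] A →ₗ[k] U) (ρ : U →ₗ[k] U ⊗[k] H) : Prop :=
  IsHomModule k αA μ e αU act ∧
  IsHomComodule k αH Δ ε αU ρ ∧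
  ∀ u a, ρ (act u a)
    = TensorProduct.map
        (TensorProduct.lift act ∘ₗ
          TensorProduct.map (LinearMap.id : U →ₗ[k] U) αA.toLinearMap)
        ((αH ^ (-n)).toLinearMap)
        ((TensorProduct.assoc k U A H).symm
          (TensorProduct.map (LinearMap.id : U →ₗ[k] U)
            (Φ ∘ₗ TensorProduct.map ((αH ^ (n + 1)).toLinearMap)
               (LinearMap.id : A →ₗ[k] A))
            (TensorProduct.assoc k U H A (ρ u ⊗ₜ[k] a))))

/-- A Hom-Long dimodule over a Hom-bialgebra `H`. -/
def IsHomLongDimodule (αH : H ≃ₗ[k] H) (μ : H →ₗ[k] H →ₗ[k] H) (e : H)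
    (Δ : H →ₗ[k] H ⊗[k] H) (ε : H →ₗ[k] k)
    (αU : U ≃ₗ[k] U) (act : U →ₗ[k] H →ₗ[k] U) (ρ : U →ₗ[k] U ⊗[k] H) : Prop :=
  IsHomModule k αH μ e αU act ∧
  IsHomComodule k αH Δ ε αU ρ ∧
  ∀ u h, ρ (act u h)
    = TensorProduct.map (TensorProduct.lift act) αH.toLinearMap
        ((TensorProduct.assoc k U H H).symm
          (TensorProduct.map (LinearMap.id : U →ₗ[k] U)
            (TensorProduct.comm k H H).toLinearMap
            (TensorProduct.assoc k U H H (ρ u ⊗ₜ[k] αH h))))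

/-- A right `H`-comodule algebra over a Hom-bialgebra `H`. -/
def IsHomComoduleAlgebra (αH : H ≃ₗ[k] H) (μH : H →ₗ[k] H →ₗ[k] H) (eH : H)
    (ΔH : H →ₗ[k] H ⊗[k] H) (εH : H →ₗ[k] k)
    (αA : A ≃ₗ[k] A) (μA : A →ₗ[k] A →ₗ[k] A) (eA : A)
    (ρA : A →ₗ[k] A ⊗[k] H) : Prop :=
  IsHomAlgebra k αA μA eA ∧
  IsHomComodule k αH ΔH εH αA ρA ∧
  (∀ a b, ρA (μA a b) = TensorProduct.map (TensorProduct.lift μA) (TensorProduct.lift μH)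
      (TensorProduct.tensorTensorTensorComm k A H A H (ρA a ⊗ₜ[k] ρA b))) ∧
  ρA eA = eA ⊗ₜ[k] eH

/-- A right `H`-module coalgebra over a Hom-bialgebra `H`. -/
def IsHomModuleCoalgebra (αH : H ≃ₗ[k] H) (μH : H →ₗ[k] H →ₗ[k] H) (eH : H)
    (ΔH : H →ₗ[k] H ⊗[k] H) (εH : H →ₗ[k] k)
    (αC : C ≃ₗ[k] C) (ΔC : C →ₗ[k] C ⊗[k] C) (εC : C →ₗ[k] k)
    (act : C →ₗ[k] H →ₗ[k] C) : Prop :=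
  IsHomCoalgebra k αC ΔC εC ∧
  IsHomModule k αH μH eH αC act ∧
  (∀ c h, ΔC (act c h) = TensorProduct.map (TensorProduct.lift act) (TensorProduct.lift act)
      (TensorProduct.tensorTensorTensorComm k C C H H (ΔC c ⊗ₜ[k] ΔH h))) ∧
  (∀ c h, εC (act c h) = εC c * εH h)

/-- A Hom-Hopf algebra `(H, α, μ, e, Δ, ε, S)` over `k`. -/
def IsHomHopf (αH : H ≃ₗ[k] H) (μ : H →ₗ[k] H →ₗ[k] H) (e : H)
    (Δ : H →ₗ[k] H ⊗[k] H) (ε : H →ₗ[k] k) (S : H →ₗ[k] H) : Prop :=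
  IsHomBialgebra k αH μ e Δ ε ∧
  (∀ h, S (αH h) = αH (S h)) ∧
  (∀ h, TensorProduct.lift μ
      (TensorProduct.map S (LinearMap.id : H →ₗ[k] H) (Δ h)) = ε h • e) ∧
  (∀ h, TensorProduct.lift μ
      (TensorProduct.map (LinearMap.id : H →ₗ[k] H) S (Δ h)) = ε h • e)

/-- A `p`-th right-right Yetter-Drinfeld module over a Hom-Hopf algebra `H`. -/
def IsYetterDrinfeld (αH : H ≃ₗ[k] H) (μ : H →ₗ[k] H →ₗ[k] H) (e : H)
    (Δ : H →ₗ[k] H ⊗[k] H) (ε : H →ₗ[k] k) (S : H →ₗ[k] H) (p : ℤ)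
    (αU : U ≃ₗ[k] U) (act : U →ₗ[k] H →ₗ[k] U) (ρ : U →ₗ[k] U ⊗[k] H) : Prop :=
  IsHomModule k αH μ e αU act ∧
  IsHomComodule k αH Δ ε αU ρ ∧
  ∀ u h, ρ (act u h)
    = TensorProduct.map
        (TensorProduct.lift act ∘ₗ
          TensorProduct.map (LinearMap.id : U →ₗ[k] U) αH.symm.toLinearMap)
        (TensorProduct.lift μ ∘ₗ
          TensorProduct.map (S ∘ₗ (αH ^ (p - 2)).toLinearMap)
            (TensorProduct.lift μ ∘ₗ
              TensorProduct.map αH.symm.toLinearMap ((αH ^ (p - 4)).toLinearMap)))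
        (TensorProduct.tensorTensorTensorComm k U H H (H ⊗[k] H)
          (TensorProduct.map (LinearMap.id : U ⊗[k] H →ₗ[k] U ⊗[k] H)
            (TensorProduct.leftComm k H H H).toLinearMap
            (TensorProduct.tensorTensorTensorComm k U H H (H ⊗[k] H)
              (ρ u ⊗ₜ[k]
                TensorProduct.map (LinearMap.id : H →ₗ[k] H) Δ (Δ h)))))

/-- The smash coproduct comultiplication on `B ⊗ H` induced by
`φ : B ⊗ H → H ⊗ B`: `Δ(b ⊗ h) = (b₁ ⊗ (h₁)^φ) ⊗ ((b₂)^φ ⊗ h₂)`. -/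
def smashComul (φ : B ⊗[k] H →ₗ[k] H ⊗[k] B) (ΔB : B →ₗ[k] B ⊗[k] B)
    (ΔH : H →ₗ[k] H ⊗[k] H) : B ⊗[k] H →ₗ[k] (B ⊗[k] H) ⊗[k] (B ⊗[k] H) :=
  (TensorProduct.assoc k B H (B ⊗[k] H)).symm.toLinearMap
  ∘ₗ TensorProduct.map (LinearMap.id : B →ₗ[k] B)
       (TensorProduct.assoc k H B H).toLinearMap
  ∘ₗ TensorProduct.map (LinearMap.id : B →ₗ[k] B)
       (TensorProduct.map φ (LinearMap.id : H →ₗ[k] H))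
  ∘ₗ TensorProduct.map (LinearMap.id : B →ₗ[k] B)
       (TensorProduct.assoc k B H H).symm.toLinearMap
  ∘ₗ (TensorProduct.assoc k B B (H ⊗[k] H)).toLinearMap
  ∘ₗ TensorProduct.map ΔB ΔH

/-- The smash coproduct counit on `B ⊗ H`: `ε(b ⊗ h) = εB(b) εH(h)`. -/
def smashCounit (εB : B →ₗ[k] k) (εH : H →ₗ[k] k) : B ⊗[k] H →ₗ[k] k :=
  (TensorProduct.lid k k).toLinearMap ∘ₗ TensorProduct.map εB εH

/-- The componentwise product on `B ⊗ H`: `(a ⊗ h)(b ⊗ g) = ab ⊗ hg`. -/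
def smashMul (μB : B →ₗ[k] B →ₗ[k] B) (μH : H →ₗ[k] H →ₗ[k] H) :
    B ⊗[k] H →ₗ[k] B ⊗[k] H →ₗ[k] B ⊗[k] H :=
  (TensorProduct.mk k (B ⊗[k] H) (B ⊗[k] H)).compr₂
    (TensorProduct.map (TensorProduct.lift μB) (TensorProduct.lift μH)
      ∘ₗ (TensorProduct.tensorTensorTensorComm k B H B H).toLinearMap)

/-- Threefold "componentwise comultiplication" `(C⊗C)⊗C → ((C⊗C)⊗C) ⊗ ((C⊗C)⊗C)`
obtained by applying `Δ2` to each factor and pairing the first and second legs. -/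
def convDelta3 (Δ2 : C →ₗ[k] C ⊗[k] C) :
    (C ⊗[k] C) ⊗[k] C →ₗ[k] ((C ⊗[k] C) ⊗[k] C) ⊗[k] ((C ⊗[k] C) ⊗[k] C) :=
  (TensorProduct.tensorTensorTensorComm k (C ⊗[k] C) (C ⊗[k] C) C C).toLinearMap
  ∘ₗ TensorProduct.map (TensorProduct.tensorTensorTensorComm k C C C C).toLinearMap
       (LinearMap.id : C ⊗[k] C →ₗ[k] C ⊗[k] C)
  ∘ₗ TensorProduct.map (TensorProduct.map Δ2 Δ2) Δ2

/-- The map `ξ_{X,Y}(x ⊗ y) = α_X⁻¹(x)·α_H^m(y₍₁₎) ⊗ α_Y⁻¹(y₍₀₎)` for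
Hom-Long dimodules `X`, `Y`. -/
def longXi (m : ℤ) (αH : H ≃ₗ[k] H) (αX : X ≃ₗ[k] X) (αY : Y ≃ₗ[k] Y)
    (act : X →ₗ[k] H →ₗ[k] X) (ρ : Y →ₗ[k] Y ⊗[k] H) : X ⊗[k] Y →ₗ[k] X ⊗[k] Y :=
  TensorProduct.map
      (TensorProduct.lift act ∘ₗ
        TensorProduct.map (LinearMap.id : X →ₗ[k] X) ((αH ^ m).toLinearMap))
      αY.symm.toLinearMap
    ∘ₗ (TensorProduct.assoc k X H Y).symm.toLinearMap
    ∘ₗ TensorProduct.map (LinearMap.id : X →ₗ[k] X) (TensorProduct.comm k Y H).toLinearMap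
    ∘ₗ TensorProduct.map αX.symm.toLinearMap ρ

/-- The associativity constraint `a_{X,Y,Z}((x⊗y)⊗z) = α_X^{i+1}(x) ⊗ (y ⊗ α_Z^{-j-1}(z))`. -/
def homAssoc (i j : ℤ) (αX : X ≃ₗ[k] X) (αZ : Z ≃ₗ[k] Z) :
    (X ⊗[k] Y) ⊗[k] Z ≃ₗ[k] X ⊗[k] (Y ⊗[k] Z) :=
  (TensorProduct.assoc k X Y Z).trans
    (TensorProduct.congr (αX ^ (i + 1))
      (TensorProduct.congr (LinearEquiv.refl k Y) (αZ ^ (-j - 1))))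

/-- The braiding `τ_{X,Y}(x ⊗ y) = α_Y^{j-i-1}(y₍₀₎) ⊗ α_X^{i-j-1}(x)·α_H^{-p}(y₍₁₎)`
for Yetter-Drinfeld modules. -/
def ydTau (p i j : ℤ) (αH : H ≃ₗ[k] H) (αX : X ≃ₗ[k] X) (αY : Y ≃ₗ[k] Y)
    (act : X →ₗ[k] H →ₗ[k] X) (ρ : Y →ₗ[k] Y ⊗[k] H) : X ⊗[k] Y →ₗ[k] Y ⊗[k] X :=
  TensorProduct.map ((αY ^ (j - i - 1)).toLinearMap)
      (TensorProduct.lift act ∘ₗ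
        TensorProduct.map ((αX ^ (i - j - 1)).toLinearMap) ((αH ^ (-p)).toLinearMap))
    ∘ₗ (TensorProduct.leftComm k X Y H).toLinearMap
    ∘ₗ TensorProduct.map (LinearMap.id : X →ₗ[k] X) ρ

end HomDefs

/-!
On pure tensors the canonical entwining is `h ⊗ a ↦ α_A⁻¹(a₀) ⊗ α_H⁻¹(h) α_Hⁿ(a₁)`, and the
compatibility condition of an `n`-th Hom-entwined module surrounds it with `α_A`, `α_H ^ (-n)` and
`α_H ^ (n + 1)`. Since `α_H ^ (-n)` is multiplicative,
`α_H ^ (-n) (α_H⁻¹ (α_H ^ (n + 1) h) · α_H ^ n (a₁)) = h a₁`, so all twists cancel and what remains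
is the Hom-Hopf condition. The same cancellation works for a coaction `A → A ⊗ H` and relative
Hom-Hopf modules; the comultiplication of `A = H` is the case of Hom-Hopf modules over `H`.
-/

section CanonicalEntwining

variable {R A H U : Type*} [CommSemiring R] [AddCommMonoid A] [Module R A]
  [AddCommMonoid H] [Module R H] [AddCommMonoid U] [Module R U]

/-- The group of linear automorphisms of `H` preserving a (not necessarily associative) bilinear
multiplication `μ`; the subgroup structure provides all integer powers of a structure map. -/
def mulPreservingAut (μ : H →ₗ[R] H →ₗ[R] H) : Subgroup (H ≃ₗ[R] H) where
  carrier := {α | ∀ a b, α (μ a b) = μ (α a) (α b)}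
  one_mem' _ _ := rfl
  mul_mem' {α β} hα hβ a b := (congrArg α (hβ a b)).trans (hα (β a) (β b))
  inv_mem' {α} hα a b := α.symm_apply_eq.mpr <| by
    rw [hα, LinearEquiv.coe_inv, α.apply_symm_apply, α.apply_symm_apply]

theorem zpow_neg_apply_mul_zpow {α : H ≃ₗ[R] H} {μ : H →ₗ[R] H →ₗ[R] H}
    (hα : α ∈ mulPreservingAut μ) (n : ℤ) (a b : H) :
    (α ^ (-n)) (μ (α.symm ((α ^ (n + 1)) a)) ((α ^ n) b)) = μ a b := by
  have left_cancel : α ^ (-n) * (α⁻¹ * α ^ (n + 1)) = 1 := by group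
  have right_cancel : α ^ (-n) * α ^ n = 1 := by group
  calc (α ^ (-n)) (μ (α.symm ((α ^ (n + 1)) a)) ((α ^ n) b))
      = μ ((α ^ (-n) * (α⁻¹ * α ^ (n + 1))) a) ((α ^ (-n) * α ^ n) b) :=
        zpow_mem hα (-n) _ _
    _ = μ a b := by rw [left_cancel, right_cancel]; rfl

/-- The canonical entwining map `h ⊗ a ↦ α_A⁻¹(a₀) ⊗ α_H⁻¹(h) α_Hⁿ(a₁)` attached to a linear
map `δ(a) = a₀ ⊗ a₁`, typically a coaction of `H` on `A`; the entwining map of a Hom-bialgebra is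
the case `δ = Δ`. -/
def canonicalEntwining (αA : A ≃ₗ[R] A) (δ : A →ₗ[R] A ⊗[R] H) (αH : H ≃ₗ[R] H)
    (μ : H →ₗ[R] H →ₗ[R] H) (n : ℤ) : H ⊗[R] A →ₗ[R] A ⊗[R] H :=
  TensorProduct.map αA.symm.toLinearMap
      (TensorProduct.lift μ ∘ₗ TensorProduct.map αH.symm.toLinearMap ((αH ^ n).toLinearMap))
    ∘ₗ (TensorProduct.leftComm R H A H).toLinearMap
    ∘ₗ TensorProduct.map (LinearMap.id : H →ₗ[R] H) δ

theorem canonicalEntwining_tmul (αA : A ≃ₗ[R] A) (δ : A →ₗ[R] A ⊗[R] H) (αH : H ≃ₗ[R] H)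
    (μ : H →ₗ[R] H →ₗ[R] H) (n : ℤ) (h : H) (a : A) :
    canonicalEntwining αA δ αH μ n (h ⊗ₜ a) =
      TensorProduct.map αA.symm.toLinearMap (μ (αH.symm h) ∘ₗ (αH ^ n).toLinearMap) (δ a) := by
  simp only [canonicalEntwining, LinearMap.comp_apply, TensorProduct.map_tmul, LinearMap.id_apply]
  induction δ a with
  | zero => simp only [TensorProduct.tmul_zero, map_zero]
  | add s t hs ht => simp only [TensorProduct.tmul_add, map_add, hs, ht]
  | tmul b g => rfl

/-- The right-hand side `(u ⊗ h) ⊗ a ↦ u · α_A(a_Φ) ⊗ α_H ^ (-n) ((α_H ^ (n + 1) h) ^ Φ)` of the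
compatibility condition of an `n`-th Hom-entwined module, as a linear map to be evaluated at
`ρ(u) ⊗ a`. -/
def entwinedAction (αA : A ≃ₗ[R] A) (αH : H ≃ₗ[R] H) (Φ : H ⊗[R] A →ₗ[R] A ⊗[R] H) (n : ℤ)
    (act : U →ₗ[R] A →ₗ[R] U) : (U ⊗[R] H) ⊗[R] A →ₗ[R] U ⊗[R] H :=
  TensorProduct.map
      (TensorProduct.lift act ∘ₗ TensorProduct.map (LinearMap.id : U →ₗ[R] U) αA.toLinearMap)
      ((αH ^ (-n)).toLinearMap)
    ∘ₗ (TensorProduct.assoc R U A H).symm.toLinearMap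
    ∘ₗ TensorProduct.map (LinearMap.id : U →ₗ[R] U)
      (Φ ∘ₗ TensorProduct.map ((αH ^ (n + 1)).toLinearMap) (LinearMap.id : A →ₗ[R] A))
    ∘ₗ (TensorProduct.assoc R U H A).toLinearMap

theorem entwinedAction_tmul_tmul (αA : A ≃ₗ[R] A) (αH : H ≃ₗ[R] H)
    (Φ : H ⊗[R] A →ₗ[R] A ⊗[R] H) (n : ℤ) (act : U →ₗ[R] A →ₗ[R] U) (u : U) (h : H) (a : A) :
    entwinedAction αA αH Φ n act ((u ⊗ₜ h) ⊗ₜ a) =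
      TensorProduct.map (act u ∘ₗ αA.toLinearMap) ((αH ^ (-n)).toLinearMap)
        (Φ ((αH ^ (n + 1)) h ⊗ₜ a)) := by
  simp only [entwinedAction, LinearMap.comp_apply, LinearEquiv.coe_coe, TensorProduct.assoc_tmul,
    TensorProduct.map_tmul, LinearMap.id_apply]
  induction Φ ((αH ^ (n + 1)) h ⊗ₜ a) with
  | zero => simp only [TensorProduct.tmul_zero, map_zero]
  | add s t hs ht => simp only [TensorProduct.tmul_add, map_add, hs, ht]
  | tmul b g => rfl

theorem map_lift_lift_tensorTensorTensorComm_tmul {M N P Q S T : Type*}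
    [AddCommMonoid M] [Module R M] [AddCommMonoid N] [Module R N]
    [AddCommMonoid P] [Module R P] [AddCommMonoid Q] [Module R Q]
    [AddCommMonoid S] [Module R S] [AddCommMonoid T] [Module R T]
    (f : M →ₗ[R] P →ₗ[R] S) (g : N →ₗ[R] Q →ₗ[R] T) (x : M ⊗[R] N) (y : P ⊗[R] Q) :
    TensorProduct.map (TensorProduct.lift f) (TensorProduct.lift g)
        (TensorProduct.tensorTensorTensorComm R M N P Q (x ⊗ₜ y)) =
      TensorProduct.map₂ f g x y := by
  have comp_eq_lift : TensorProduct.map (TensorProduct.lift f) (TensorProduct.lift g) ∘ₗ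
      (TensorProduct.tensorTensorTensorComm R M N P Q).toLinearMap =
        TensorProduct.lift (TensorProduct.map₂ f g) :=
    TensorProduct.ext_fourfold' fun _ _ _ _ => rfl
  exact LinearMap.congr_fun comp_eq_lift (x ⊗ₜ y)

theorem entwinedAction_canonicalEntwining_tmul (αA : A ≃ₗ[R] A) (δ : A →ₗ[R] A ⊗[R] H)
    {αH : H ≃ₗ[R] H} {μ : H →ₗ[R] H →ₗ[R] H} (hα : αH ∈ mulPreservingAut μ) (n : ℤ)
    (act : U →ₗ[R] A →ₗ[R] U) (t : U ⊗[R] H) (a : A) :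
    entwinedAction αA αH (canonicalEntwining αA δ αH μ n) n act (t ⊗ₜ a) =
      TensorProduct.map₂ act μ t (δ a) := by
  induction t with
  | zero => simp only [TensorProduct.zero_tmul, map_zero, LinearMap.zero_apply]
  | add s t hs ht => simp only [TensorProduct.add_tmul, map_add, LinearMap.add_apply, hs, ht]
  | tmul u h =>
    have module_leg : (act u ∘ₗ αA.toLinearMap) ∘ₗ αA.symm.toLinearMap = act u := by
      ext b
      exact congrArg (act u) (αA.apply_symm_apply b)
    have algebra_leg : (αH ^ (-n)).toLinearMap ∘ₗ
        μ (αH.symm ((αH ^ (n + 1)) h)) ∘ₗ (αH ^ n).toLinearMap = μ h := by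
      ext g
      exact zpow_neg_apply_mul_zpow hα n h g
    rw [entwinedAction_tmul_tmul, canonicalEntwining_tmul, TensorProduct.map_map, module_leg,
      algebra_leg, TensorProduct.map₂_apply_tmul]

end CanonicalEntwining

theorem homEntwinedModule_iff_homHopfModule_general
    {A H U : Type*} [AddCommGroup A] [Module k A] [AddCommGroup H] [Module k H]
    [AddCommGroup U] [Module k U]
    (αA : A ≃ₗ[k] A) (μA : A →ₗ[k] A →ₗ[k] A) (e : A) (δ : A →ₗ[k] A ⊗[k] H)
    (αH : H ≃ₗ[k] H) (μH : H →ₗ[k] H →ₗ[k] H) (Δ : H →ₗ[k] H ⊗[k] H) (ε : H →ₗ[k] k)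
    (hα : ∀ a b, αH (μH a b) = μH (αH a) (αH b)) (n : ℤ)
    (αU : U ≃ₗ[k] U) (act : U →ₗ[k] A →ₗ[k] U) (ρ : U →ₗ[k] U ⊗[k] H) :
    IsHomEntwinedModule k αA μA e αH Δ ε (canonicalEntwining αA δ αH μH n) n αU act ρ ↔
      IsHomModule k αA μA e αU act ∧ IsHomComodule k αH Δ ε αU ρ ∧
        ∀ u a, ρ (act u a)
          = TensorProduct.map (TensorProduct.lift act) (TensorProduct.lift μH)
              (TensorProduct.tensorTensorTensorComm k U H A H (ρ u ⊗ₜ[k] δ a)) := by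
  refine and_congr_right' <| and_congr_right' <| forall₂_congr fun u a => ?_
  rw [map_lift_lift_tensorTensorTensorComm_tmul,
    ← entwinedAction_canonicalEntwining_tmul αA δ hα n act (ρ u) a]
  rfl

/-- for the canonical Hom-entwining structure on a
Hom-bialgebra `H`, the `n`-th Hom-entwined modules are exactly the
Hom-Hopf modules. -/
theorem homEntwinedModule_iff_homHopfModule
    {H U : Type*} [AddCommGroup H] [Module k H] [AddCommGroup U] [Module k U]
    (αH : H ≃ₗ[k] H) (μ : H →ₗ[k] H →ₗ[k] H) (e : H)
    (Δ : H →ₗ[k] H ⊗[k] H) (ε : H →ₗ[k] k)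
    (hH : IsHomBialgebra k αH μ e Δ ε) (n : ℤ)
    (αU : U ≃ₗ[k] U) (act : U →ₗ[k] H →ₗ[k] U) (ρ : U →ₗ[k] U ⊗[k] H)
    (hMod : IsHomModule k αH μ e αU act)
    (hCom : IsHomComodule k αH Δ ε αU ρ) :
    IsHomEntwinedModule k αH μ e αH Δ ε
        (TensorProduct.map αH.symm.toLinearMap
            (TensorProduct.lift μ ∘ₗ
              TensorProduct.map αH.symm.toLinearMap ((αH ^ n).toLinearMap))
          ∘ₗ (TensorProduct.leftComm k H H H).toLinearMap
          ∘ₗ TensorProduct.map (LinearMap.id : H →ₗ[k] H) Δ) n αU act ρ ↔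
      ∀ u h, ρ (act u h)
        = TensorProduct.map (TensorProduct.lift act) (TensorProduct.lift μ)
            (TensorProduct.tensorTensorTensorComm k U H H H (ρ u ⊗ₜ[k] Δ h)) :=
  (homEntwinedModule_iff_homHopfModule_general k αH μ e Δ αH μ Δ ε hH.1.1 n αU act ρ).trans
    ⟨fun hU => hU.2.2, fun hρ => ⟨hMod, hCom, hρ⟩⟩
end
end

section
/- Let (H, α_H) be a Hom-bialgebra over a field k, let (A, α_A) be a right H-comodule algebra that is moreover a Hom-bialgebra, let (C, α_C) be a right H-module coalgebra that is moreover a Hom-bialgebra, let m ∈ ℤ, and let Φ : C⊗A → A⊗C be the map Φ(c⊗a) = α_A^{-1}(a₍₀₎) ⊗ α_C^{-1}(c)·α_H^{m}(a₍₁₎). Then the following are equivalent: (i) for all c,d ∈ C and a ∈ A one has Σ (a₁)₍₀₎ ⊗ (a₂)₍₀₎ ⊗ (c·(a₁)₍₁₎)(d·(a₂)₍₁₎) = Σ (a₍₀₎)₁ ⊗ (a₍₀₎)₂ ⊗ (cd)·α_H²(a₍₁₎) and ε_A(a)1_C = Σ ε_A(a₍₀₎) 1_C·a₍₁₎; (ii)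 (C,A,Φ) is a Hom-monoidal entwining datum. -/
open TensorProduct BigOperators

noncomputable section

variable (k : Type*) [Field k]

/-!
Restricting the action of `H` on `C` along `αH ^ m` reduces the datum `Φ` to the case `m = 0`,
because `αH ^ m` is an automorphism of the Hom-bialgebra `H`. Condition (i) is insensitive to
this restriction: the coaction intertwines `αA ^ m` with `αA ^ m ⊗ αH ^ m`, so both sides of (i)
are merely conjugated by `αA ^ m`. For `m = 0` the conditions (E1)–(E4) follow from the comodule
algebra and module coalgebra axioms, while (E5) is (i) composed with the invertible maps
`c ⊗ d ↦ αC(c) ⊗ αC(d)` and `a ⊗ b ↦ αA⁻¹(a) ⊗ αA⁻¹(b)`.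
-/

section

variable {G G' X Y : Type*} [Group G] [MulAction G X] [Group G'] [MulAction G' Y]

theorem semiconj_zpow_smul {f : X → Y} {g : G} {g' : G'}
    (h : Function.Semiconj f (g • ·) (g' • ·)) (n : ℤ) :
    Function.Semiconj f (g ^ n • ·) (g' ^ n • ·) := by
  have h_inv : Function.Semiconj f (g⁻¹ • ·) (g'⁻¹ • ·) := fun x => by
    simpa [eq_inv_smul_iff] using (h (g⁻¹ • x)).symm
  induction n with
  | zero => exact fun x => by simp
  | succ n ih => exact fun x => by simpa [zpow_add_one, mul_smul, h.eq] using ih (g • x)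
  | pred n ih => exact fun x => by simpa [zpow_sub_one, mul_smul, h_inv.eq] using ih (g⁻¹ • x)

end

section TensorMaps

variable {R M N P Q S T A C H : Type*} [CommSemiring R]
variable [AddCommMonoid M] [Module R M] [AddCommMonoid N] [Module R N]
variable [AddCommMonoid P] [Module R P] [AddCommMonoid Q] [Module R Q]
variable [AddCommMonoid S] [Module R S] [AddCommMonoid T] [Module R T]
variable [AddCommMonoid A] [Module R A] [AddCommMonoid C] [Module R C]
variable [AddCommMonoid H] [Module R H]

theorem map_lift_lift_tensorTensorTensorComm (f : M →ₗ[R] N →ₗ[R] S) (g : P →ₗ[R] Q →ₗ[R] T)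
    (x : M ⊗[R] P) (y : N ⊗[R] Q) :
    TensorProduct.map (TensorProduct.lift f) (TensorProduct.lift g)
        (TensorProduct.tensorTensorTensorComm R M P N Q (x ⊗ₜ[R] y))
      = TensorProduct.map₂ f g x y := by
  suffices TensorProduct.map (TensorProduct.lift f) (TensorProduct.lift g)
      ∘ₗ (TensorProduct.tensorTensorTensorComm R M P N Q).toLinearMap
      = TensorProduct.lift (TensorProduct.map₂ f g) from congr($this (x ⊗ₜ[R] y))
  ext
  simp [TensorProduct.map₂_apply_tmul]

theorem comp_comp_inj {u : P →ₗ[R] Q} {v : M →ₗ[R] N} {f g : N →ₗ[R] P}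
    (hu : Function.Injective u) (hv : Function.Surjective v) :
    u ∘ₗ f ∘ₗ v = u ∘ₗ g ∘ₗ v ↔ f = g :=
  (LinearMap.cancel_left hu).trans (LinearMap.cancel_right hv)

theorem apply_lid_map (ε : A →ₗ[R] R) (f : H →ₗ[R] P) (x : A ⊗[R] H) :
    f (TensorProduct.lid R H (TensorProduct.map ε LinearMap.id x))
      = TensorProduct.lid R P (TensorProduct.map ε f x) := by
  induction x using TensorProduct.induction_on with
  | zero => simp
  | add u v hu hv => simp only [map_add, hu, hv]
  | tmul a h => simp

/-- The map `c ⊗ a ↦ a₍₀₎ ⊗ c·a₍₁₎`, the Doi–Hopf entwining before the structure maps are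
inserted. -/
def coactThenAct (act : C →ₗ[R] H →ₗ[R] C) (ρ : A →ₗ[R] A ⊗[R] H) :
    C ⊗[R] A →ₗ[R] A ⊗[R] C :=
  TensorProduct.map LinearMap.id (TensorProduct.lift act)
    ∘ₗ (TensorProduct.leftComm R C A H).toLinearMap
    ∘ₗ TensorProduct.map LinearMap.id ρ

/-- The map `c ⊗ a ↦ αA⁻¹(a₍₀₎) ⊗ αC⁻¹(c)·a₍₁₎`. The map `Φ` of the theorem is obtained by
restricting the action along `αH ^ m`. -/
def doiHopfMap (αA : A ≃ₗ[R] A) (αC : C ≃ₗ[R] C) (act : C →ₗ[R] H →ₗ[R] C)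
    (ρ : A →ₗ[R] A ⊗[R] H) : C ⊗[R] A →ₗ[R] A ⊗[R] C :=
  TensorProduct.map αA.symm.toLinearMap LinearMap.id
    ∘ₗ coactThenAct act ρ ∘ₗ TensorProduct.map αC.symm.toLinearMap LinearMap.id

/-- The map `(c ⊗ d) ⊗ a ↦ ((a₁)_φ ⊗ (a₂)_ψ) ⊗ c^φ d^ψ`, with `φ = ψ`: comultiply first, then
entwine. It is the common shape of the left-hand sides of condition (i) and (E5). -/
def comulThenEntwine (Δ : A →ₗ[R] A ⊗[R] A) (μ : C →ₗ[R] C →ₗ[R] C)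
    (φ : C ⊗[R] A →ₗ[R] A ⊗[R] C) : (C ⊗[R] C) ⊗[R] A →ₗ[R] (A ⊗[R] A) ⊗[R] C :=
  TensorProduct.map LinearMap.id (TensorProduct.lift μ)
    ∘ₗ (TensorProduct.tensorTensorTensorComm R A C A C).toLinearMap
    ∘ₗ TensorProduct.map φ φ
    ∘ₗ (TensorProduct.tensorTensorTensorComm R C C A A).toLinearMap
    ∘ₗ TensorProduct.map LinearMap.id Δ

/-- The map `(c ⊗ d) ⊗ a ↦ ((a_φ)₁ ⊗ (a_φ)₂) ⊗ (cd)^φ`: entwine first, then comultiply. It is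
the common shape of the right-hand sides of condition (i) and (E5). -/
def entwineThenComul (Δ : A →ₗ[R] A ⊗[R] A) (μ : C →ₗ[R] C →ₗ[R] C)
    (φ : C ⊗[R] A →ₗ[R] A ⊗[R] C) : (C ⊗[R] C) ⊗[R] A →ₗ[R] (A ⊗[R] A) ⊗[R] C :=
  TensorProduct.map Δ LinearMap.id ∘ₗ φ
    ∘ₗ TensorProduct.map (TensorProduct.lift μ) LinearMap.id

theorem map_lift_leftComm_tmul (f : C →ₗ[R] H →ₗ[R] P) (g : A →ₗ[R] Q) (c : C)
    (x : A ⊗[R] H) :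
    TensorProduct.map g (TensorProduct.lift f) (TensorProduct.leftComm R C A H (c ⊗ₜ[R] x))
      = TensorProduct.map g (f c) x := by
  suffices TensorProduct.map g (TensorProduct.lift f)
      ∘ₗ (TensorProduct.leftComm R C A H).toLinearMap ∘ₗ TensorProduct.mk R C (A ⊗[R] H) c
      = TensorProduct.map g (f c) from congr($this x)
  ext
  simp

theorem coactThenAct_tmul (act : C →ₗ[R] H →ₗ[R] C) (ρ : A →ₗ[R] A ⊗[R] H) (c : C) (a : A) :
    coactThenAct act ρ (c ⊗ₜ[R] a) = TensorProduct.map LinearMap.id (act c) (ρ a) :=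
  map_lift_leftComm_tmul ..

theorem doiHopfMap_tmul (αA : A ≃ₗ[R] A) (αC : C ≃ₗ[R] C) (act : C →ₗ[R] H →ₗ[R] C)
    (ρ : A →ₗ[R] A ⊗[R] H) (c : C) (a : A) :
    doiHopfMap αA αC act ρ (c ⊗ₜ[R] a)
      = TensorProduct.map αA.symm.toLinearMap (act (αC.symm c)) (ρ a) := by
  simp only [doiHopfMap, LinearMap.comp_apply, TensorProduct.map_tmul, coactThenAct_tmul,
    TensorProduct.map_map, LinearMap.comp_id, LinearMap.id_comp, LinearMap.id_apply,
    LinearEquiv.coe_coe]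

theorem assoc_map_doiHopfMap_assoc_symm (αA : A ≃ₗ[R] A) (αC : C ≃ₗ[R] C)
    (act : C →ₗ[R] H →ₗ[R] C) (ρ : A →ₗ[R] A ⊗[R] H) (c : C) (x : A ⊗[R] P) :
    TensorProduct.assoc R A C P
        (TensorProduct.map (doiHopfMap αA αC act ρ) LinearMap.id
          ((TensorProduct.assoc R C A P).symm (c ⊗ₜ[R] x)))
      = TensorProduct.map αA.symm.toLinearMap
          (TensorProduct.map (act (αC.symm c)) LinearMap.id)
          (TensorProduct.assoc R A H P (TensorProduct.map ρ LinearMap.id x)) := by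
  induction x using TensorProduct.induction_on with
  | zero => simp
  | add u v hu hv => simp only [TensorProduct.tmul_add, map_add, hu, hv]
  | tmul a p =>
    simp only [TensorProduct.map_tmul, TensorProduct.assoc_symm_tmul, doiHopfMap_tmul,
      LinearMap.id_apply, TensorProduct.map_map_assoc]

theorem doiHopfMap_compl₂ (αA : A ≃ₗ[R] A) (αC : C ≃ₗ[R] C) (act : C →ₗ[R] H →ₗ[R] C)
    (γ : H →ₗ[R] H) (ρ : A →ₗ[R] A ⊗[R] H) :
    doiHopfMap αA αC (act.compl₂ γ) ρ
      = TensorProduct.map αA.symm.toLinearMap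
          (TensorProduct.lift act ∘ₗ TensorProduct.map αC.symm.toLinearMap γ)
        ∘ₗ (TensorProduct.leftComm R C A H).toLinearMap
        ∘ₗ TensorProduct.map LinearMap.id ρ := by
  have h_act : TensorProduct.lift act ∘ₗ TensorProduct.map αC.symm.toLinearMap γ
      = TensorProduct.lift ((act.compl₂ γ) ∘ₗ αC.symm.toLinearMap) :=
    TensorProduct.ext' fun _ _ => rfl
  ext c a
  simp [h_act, doiHopfMap_tmul, map_lift_leftComm_tmul]

theorem coactThenAct_compl₂ {γ : H →ₗ[R] H} {δ : A ≃ₗ[R] A} {ρ : A →ₗ[R] A ⊗[R] H}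
    (hρ : ∀ a, ρ (δ a) = TensorProduct.map δ.toLinearMap γ (ρ a)) (act : C →ₗ[R] H →ₗ[R] C) :
    coactThenAct (act.compl₂ γ) ρ
      = TensorProduct.map δ.symm.toLinearMap LinearMap.id
        ∘ₗ coactThenAct act ρ ∘ₗ TensorProduct.map LinearMap.id δ.toLinearMap := by
  ext c a
  simp only [TensorProduct.AlgebraTensorModule.curry_apply, LinearMap.restrictScalars_self,
    TensorProduct.curry_apply, LinearMap.comp_apply, TensorProduct.map_tmul,
    LinearEquiv.coe_coe, LinearMap.id_apply, coactThenAct_tmul, hρ, TensorProduct.map_map]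
  congr 2
  ext
  simp

theorem comulThenEntwine_conj {Δ : A →ₗ[R] A ⊗[R] A} {σ : A →ₗ[R] A}
    (hσ : ∀ a, Δ (σ a) = TensorProduct.map σ σ (Δ a)) (μ : C →ₗ[R] C →ₗ[R] C)
    (θ : A →ₗ[R] A) (β : C →ₗ[R] C) (φ : C ⊗[R] A →ₗ[R] A ⊗[R] C) :
    comulThenEntwine Δ μ (TensorProduct.map θ LinearMap.id ∘ₗ φ ∘ₗ TensorProduct.map β σ)
      = TensorProduct.map (TensorProduct.map θ θ) LinearMap.id
        ∘ₗ comulThenEntwine Δ μ φ ∘ₗ TensorProduct.map (TensorProduct.map β β) σ := by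
  have h_source : (TensorProduct.tensorTensorTensorComm R C C A A).toLinearMap
        ∘ₗ TensorProduct.map LinearMap.id Δ ∘ₗ TensorProduct.map (TensorProduct.map β β) σ
      = TensorProduct.map (TensorProduct.map β σ) (TensorProduct.map β σ)
        ∘ₗ (TensorProduct.tensorTensorTensorComm R C C A A).toLinearMap
        ∘ₗ TensorProduct.map LinearMap.id Δ := by
    rw [← LinearMap.comp_assoc _ _ (TensorProduct.map (TensorProduct.map β σ) _),
      ← TensorProduct.tensorTensorTensorComm_comp_map, LinearMap.comp_assoc,
      ← TensorProduct.map_comp, ← TensorProduct.map_comp, LinearMap.id_comp, LinearMap.comp_id,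
      show Δ ∘ₗ σ = TensorProduct.map σ σ ∘ₗ Δ from LinearMap.ext hσ]
  have h_target : TensorProduct.map LinearMap.id (TensorProduct.lift μ)
        ∘ₗ (TensorProduct.tensorTensorTensorComm R A C A C).toLinearMap
        ∘ₗ TensorProduct.map (TensorProduct.map θ LinearMap.id) (TensorProduct.map θ LinearMap.id)
      = TensorProduct.map (TensorProduct.map θ θ) LinearMap.id
        ∘ₗ TensorProduct.map LinearMap.id (TensorProduct.lift μ)
        ∘ₗ (TensorProduct.tensorTensorTensorComm R A C A C).toLinearMap :=
    TensorProduct.ext_fourfold' fun _ _ _ _ => rfl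
  simp only [comulThenEntwine, TensorProduct.map_comp, LinearMap.comp_assoc, h_source]
  simp only [← LinearMap.comp_assoc] at h_target ⊢
  rw [h_target]

theorem comulThenEntwine_comp_map (Δ : A →ₗ[R] A ⊗[R] A) (μ : C →ₗ[R] C →ₗ[R] C)
    (φ : C ⊗[R] A →ₗ[R] A ⊗[R] C) (β : C ⊗[R] C →ₗ[R] C ⊗[R] C) :
    comulThenEntwine Δ μ φ ∘ₗ TensorProduct.map β LinearMap.id
      = TensorProduct.map LinearMap.id (TensorProduct.lift μ)
        ∘ₗ (TensorProduct.tensorTensorTensorComm R A C A C).toLinearMap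
        ∘ₗ TensorProduct.map φ φ
        ∘ₗ (TensorProduct.tensorTensorTensorComm R C C A A).toLinearMap
        ∘ₗ TensorProduct.map β Δ := by
  simp only [comulThenEntwine, LinearMap.comp_assoc, ← TensorProduct.map_comp,
    LinearMap.id_comp, LinearMap.comp_id]

theorem comulThenEntwine_doiHopfMap (Δ : A →ₗ[R] A ⊗[R] A) (μ : C →ₗ[R] C →ₗ[R] C)
    (αA : A ≃ₗ[R] A) (αC : C ≃ₗ[R] C) (act : C →ₗ[R] H →ₗ[R] C) (ρ : A →ₗ[R] A ⊗[R] H) :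
    comulThenEntwine Δ μ (doiHopfMap αA αC act ρ)
        ∘ₗ TensorProduct.map (TensorProduct.map (αC.toLinearMap ∘ₗ αC.toLinearMap)
          (αC.toLinearMap ∘ₗ αC.toLinearMap)) LinearMap.id
      = TensorProduct.map (TensorProduct.map αA.symm.toLinearMap αA.symm.toLinearMap)
          LinearMap.id
        ∘ₗ comulThenEntwine Δ μ (coactThenAct act ρ)
        ∘ₗ TensorProduct.map (TensorProduct.map αC.toLinearMap αC.toLinearMap)
          LinearMap.id := by
  rw [doiHopfMap, comulThenEntwine_conj (σ := LinearMap.id) (by simp)]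
  simp only [LinearMap.comp_assoc, ← TensorProduct.map_comp, LinearMap.comp_id,
    LinearEquiv.symm_comp_cancel_left]

theorem entwineThenComul_conj {Δ : A →ₗ[R] A ⊗[R] A} {θ : A →ₗ[R] A}
    (hθ : Δ ∘ₗ θ = TensorProduct.map θ θ ∘ₗ Δ) (μ : C →ₗ[R] C →ₗ[R] C) (σ : A →ₗ[R] A)
    (φ : C ⊗[R] A →ₗ[R] A ⊗[R] C) :
    entwineThenComul Δ μ
        (TensorProduct.map θ LinearMap.id ∘ₗ φ ∘ₗ TensorProduct.map LinearMap.id σ)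
      = TensorProduct.map (TensorProduct.map θ θ) LinearMap.id
        ∘ₗ entwineThenComul Δ μ φ ∘ₗ TensorProduct.map LinearMap.id σ := by
  ext c d a
  simp [entwineThenComul, TensorProduct.map_map, hθ]

theorem comp_symm_eq_map_symm_comp {Δ : A →ₗ[R] A ⊗[R] A} {δ : A ≃ₗ[R] A}
    (hδ : ∀ a, Δ (δ a) = TensorProduct.map δ.toLinearMap δ.toLinearMap (Δ a)) :
    Δ ∘ₗ δ.symm.toLinearMap
      = TensorProduct.map δ.symm.toLinearMap δ.symm.toLinearMap ∘ₗ Δ := by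
  ext a
  obtain ⟨a, rfl⟩ := δ.surjective a
  simp [hδ, TensorProduct.map_map]

end TensorMaps

section DoiHopf

variable {k} {A C H H' : Type*} [AddCommGroup A] [Module k A] [AddCommGroup C] [Module k C]
variable [AddCommGroup H] [Module k H] [AddCommGroup H'] [Module k H']
variable {αH : H ≃ₗ[k] H} {μH : H →ₗ[k] H →ₗ[k] H} {eH : H}
  {ΔH : H →ₗ[k] H ⊗[k] H} {εH : H →ₗ[k] k}
variable {αH' : H' ≃ₗ[k] H'} {μH' : H' →ₗ[k] H' →ₗ[k] H'} {eH' : H'}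
  {ΔH' : H' →ₗ[k] H' ⊗[k] H'} {εH' : H' →ₗ[k] k}
variable {αA : A ≃ₗ[k] A} {μA : A →ₗ[k] A →ₗ[k] A} {eA : A}
  {ΔA : A →ₗ[k] A ⊗[k] A} {εA : A →ₗ[k] k} {ρ : A →ₗ[k] A ⊗[k] H}
variable {αC : C ≃ₗ[k] C} {μC : C →ₗ[k] C →ₗ[k] C} {eC : C}
  {ΔC : C →ₗ[k] C ⊗[k] C} {εC : C →ₗ[k] k} {act : C →ₗ[k] H →ₗ[k] C}

theorem IsHomAlgebra.zpow_mul (h : IsHomAlgebra k αA μA eA) (n : ℤ) (a b : A) :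
    (αA ^ n) (μA a b) = μA ((αA ^ n) a) ((αA ^ n) b) :=
  (semiconj_zpow_smul (f := fun p : A × A => μA p.1 p.2) (g := αA) (g' := αA)
    (fun p => (h.1 p.1 p.2).symm) n (a, b)).symm

theorem IsHomAlgebra.zpow_unit (h : IsHomAlgebra k αA μA eA) (n : ℤ) : (αA ^ n) eA = eA :=
  MulAction.mem_stabilizer_iff.1 <|
    zpow_mem (MulAction.mem_stabilizer_iff.2 h.2.2.1 : αA ∈ MulAction.stabilizer _ eA) n

theorem IsHomCoalgebra.comul_zpow (h : IsHomCoalgebra k αC ΔC εC) (n : ℤ) (c : C) :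
    ΔC ((αC ^ n) c)
      = TensorProduct.map (αC ^ n).toLinearMap (αC ^ n).toLinearMap (ΔC c) := by
  simpa using! semiconj_zpow_smul (g := αC) (g' := TensorProduct.congr αC αC) h.1 n c

theorem IsHomCoalgebra.counit_zpow (h : IsHomCoalgebra k αC ΔC εC) (n : ℤ) (c : C) :
    εC ((αC ^ n) c) = εC c := by
  simpa using! semiconj_zpow_smul (g := αC) (g' := (1 : k ≃ₗ[k] k)) h.2.1 n c

theorem IsHomComodule.coact_zpow (h : IsHomComodule k αH ΔH εH αA ρ) (n : ℤ) (a : A) :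
    ρ ((αA ^ n) a)
      = TensorProduct.map (αA ^ n).toLinearMap (αH ^ n).toLinearMap (ρ a) := by
  simpa using! semiconj_zpow_smul (g := αA) (g' := TensorProduct.congr αA αH) h.1 n a

theorem IsHomAlgebra.symm_mul (h : IsHomAlgebra k αA μA eA) (a b : A) :
    αA.symm (μA a b) = μA (αA.symm a) (αA.symm b) := by
  simpa using! h.zpow_mul (-1) a b

theorem IsHomAlgebra.symm_unit (h : IsHomAlgebra k αA μA eA) : αA.symm eA = eA := by
  simpa using! h.zpow_unit (-1)

theorem IsHomCoalgebra.comul_symm (h : IsHomCoalgebra k αC ΔC εC) (c : C) :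
    ΔC (αC.symm c) = TensorProduct.map αC.symm.toLinearMap αC.symm.toLinearMap (ΔC c) :=
  LinearMap.congr_fun (comp_symm_eq_map_symm_comp h.1) c

theorem IsHomCoalgebra.counit_symm (h : IsHomCoalgebra k αC ΔC εC) (c : C) :
    εC (αC.symm c) = εC c := by
  simpa using! h.counit_zpow (-1) c

theorem IsHomModuleCoalgebra.comul_act
    (h : IsHomModuleCoalgebra k αH μH eH ΔH εH αC ΔC εC act) (c : C) (g : H) :
    ΔC (act c g) = TensorProduct.map₂ act act (ΔC c) (ΔH g) := by
  rw [h.2.2.1, map_lift_lift_tensorTensorTensorComm]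

theorem IsHomComoduleAlgebra.coact_mul
    (h : IsHomComoduleAlgebra k αH μH eH ΔH εH αA μA eA ρ) (a b : A) :
    ρ (μA a b) = TensorProduct.map₂ μA μH (ρ a) (ρ b) := by
  rw [h.2.2.1, map_lift_lift_tensorTensorTensorComm]

variable (αH μH eH ΔH εH αH' μH' eH' ΔH' εH') in
/-- A morphism of Hom-bialgebras `γ : H → H'`. -/
structure IsHomBialgebraHom (γ : H →ₗ[k] H') : Prop where
  map_twist (h : H) : γ (αH h) = αH' (γ h)
  map_mul (g h : H) : γ (μH g h) = μH' (γ g) (γ h)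
  map_unit : γ eH = eH'
  comul_map (h : H) : ΔH' (γ h) = TensorProduct.map γ γ (ΔH h)
  counit_map (h : H) : εH' (γ h) = εH h

theorem IsHomBialgebra.isHomBialgebraHom_zpow (h : IsHomBialgebra k αH μH eH ΔH εH) (n : ℤ) :
    IsHomBialgebraHom αH μH eH ΔH εH αH μH eH ΔH εH (αH ^ n).toLinearMap where
  map_twist x := congr($((Commute.zpow_self αH n).eq) x)
  map_mul := h.1.zpow_mul n
  map_unit := h.1.zpow_unit n
  comul_map := h.2.1.comul_zpow n
  counit_map := h.2.1.counit_zpow n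

theorem IsHomModuleCoalgebra.compl₂ {act' : C →ₗ[k] H' →ₗ[k] C} {γ : H →ₗ[k] H'}
    (hC : IsHomModuleCoalgebra k αH' μH' eH' ΔH' εH' αC ΔC εC act')
    (hγ : IsHomBialgebraHom αH μH eH ΔH εH αH' μH' eH' ΔH' εH' γ) :
    IsHomModuleCoalgebra k αH μH eH ΔH εH αC ΔC εC (act'.compl₂ γ) := by
  have comul_act := hC.comul_act
  obtain ⟨hΔ, ⟨hα, hunit, hassoc⟩, -, hε⟩ := hC
  refine ⟨hΔ, ⟨?_, ?_, ?_⟩, ?_, ?_⟩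
  · simp [hα, hγ.map_twist]
  · simp [hunit, hγ.map_unit]
  · simp [hassoc, hγ.map_twist, hγ.map_mul]
  · intro c h
    have h_map₂ : (TensorProduct.map₂ act' act').compl₂ (TensorProduct.map γ γ)
        = TensorProduct.map₂ (act'.compl₂ γ) (act'.compl₂ γ) := by
      ext
      simp [TensorProduct.map₂_apply_tmul]
    rw [map_lift_lift_tensorTensorTensorComm, LinearMap.compl₂_apply, comul_act, hγ.comul_map,
      ← h_map₂, LinearMap.compl₂_apply]
  · simp [hε, hγ.counit_map]

theorem IsHomModule.act_symm_act (h : IsHomModule k αH μH eH αC act) (c : C) (g g' : H) :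
    act (act (αC.symm c) g) (αH g') = act c (μH g g') := by
  simpa using h.2.2 (αC.symm c) g g'

theorem doiHopfMap_map_twist (hρ : IsHomComodule k αH ΔH εH αA ρ)
    (hact : IsHomModule k αH μH eH αC act) (c : C) (a : A) :
    TensorProduct.map αA.toLinearMap αC.toLinearMap (doiHopfMap αA αC act ρ (c ⊗ₜ[k] a))
      = doiHopfMap αA αC act ρ (αC c ⊗ₜ[k] αA a) := by
  rw [doiHopfMap_tmul, doiHopfMap_tmul, hρ.1, TensorProduct.map_map, TensorProduct.map_map]
  congr 2
  · ext; simp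
  · ext; simp [hact.1]

theorem doiHopfMap_mul (hA : IsHomComoduleAlgebra k αH μH eH ΔH εH αA μA eA ρ)
    (hact : IsHomModule k αH μH eH αC act) (c : C) (a b : A) :
    TensorProduct.map (TensorProduct.lift μA) αC.toLinearMap
        ((TensorProduct.assoc k A A C).symm
          (TensorProduct.map LinearMap.id (doiHopfMap αA αC act ρ)
            (TensorProduct.assoc k A C A (doiHopfMap αA αC act ρ (c ⊗ₜ[k] a) ⊗ₜ[k] b))))
      = doiHopfMap αA αC act ρ (αC c ⊗ₜ[k] μA a b) := by
  rw [doiHopfMap_tmul, doiHopfMap_tmul, LinearEquiv.symm_apply_apply, hA.coact_mul]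
  induction ρ a using TensorProduct.induction_on with
  | zero => simp
  | add u v hu hv => simp only [TensorProduct.add_tmul, map_add, LinearMap.add_apply, hu, hv]
  | tmul a₀ g =>
    simp only [TensorProduct.map_tmul, TensorProduct.assoc_tmul, doiHopfMap_tmul,
      LinearMap.id_apply]
    induction ρ b using TensorProduct.induction_on with
    | zero => simp
    | add u v hu hv => simp only [TensorProduct.tmul_add, map_add, hu, hv]
    | tmul b₀ h =>
      simp [TensorProduct.map₂_apply_tmul, hA.1.symm_mul, hact.1, hact.act_symm_act]

theorem doiHopfMap_comul (hρ : IsHomComodule k αH ΔH εH αA ρ)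
    (hC : IsHomModuleCoalgebra k αH μH eH ΔH εH αC ΔC εC act) (c : C) (a : A) :
    TensorProduct.map αA.toLinearMap ΔC (doiHopfMap αA αC act ρ (c ⊗ₜ[k] a))
      = TensorProduct.assoc k A C C
          (TensorProduct.map (doiHopfMap αA αC act ρ) LinearMap.id
            ((TensorProduct.assoc k C A C).symm
              (TensorProduct.map LinearMap.id (doiHopfMap αA αC act ρ)
                (TensorProduct.assoc k C C A (ΔC c ⊗ₜ[k] αA a))))) := by
  have h_comul_act : ΔC ∘ₗ act (αC.symm c) = TensorProduct.map₂ act act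
      (TensorProduct.map αC.symm.toLinearMap αC.symm.toLinearMap (ΔC c)) ∘ₗ ΔH :=
    LinearMap.ext fun g => by simp [hC.comul_act, hC.1.comul_symm]
  rw [doiHopfMap_tmul, TensorProduct.map_map, h_comul_act, LinearEquiv.comp_symm]
  induction ΔC c using TensorProduct.induction_on with
  | zero => simp
  | add u v hu hv =>
    simp only [TensorProduct.add_tmul, map_add, LinearMap.add_comp, TensorProduct.map_add_right,
      LinearMap.add_apply, hu, hv]
  | tmul c₁ c₂ =>
    calc
      _ = TensorProduct.map αA.symm.toLinearMap
            (TensorProduct.map (act (αC.symm c₁)) (act (αC.symm c₂)))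
            (TensorProduct.map αA.toLinearMap ΔH (ρ a)) := by
        rw [TensorProduct.map_map, LinearEquiv.symm_comp, TensorProduct.map_tmul,
          TensorProduct.map₂_apply_tmul]
        rfl
      _ = TensorProduct.map αA.symm.toLinearMap
            (TensorProduct.map (act (αC.symm c₁)) (act (αC.symm c₂)))
            (TensorProduct.assoc k A H H (TensorProduct.map ρ αH.toLinearMap (ρ a))) := by
        rw [hρ.2.1]
      _ = _ := by
        simp only [TensorProduct.assoc_tmul, TensorProduct.map_tmul, LinearMap.id_apply,
          doiHopfMap_tmul, hρ.1, assoc_map_doiHopfMap_assoc_symm, TensorProduct.map_map_assoc,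
          TensorProduct.map_map, LinearEquiv.symm_comp, LinearMap.id_comp, LinearMap.comp_id]

theorem doiHopfMap_counit (hρ : IsHomComodule k αH ΔH εH αA ρ)
    (hC : IsHomModuleCoalgebra k αH μH eH ΔH εH αC ΔC εC act) (c : C) (a : A) :
    TensorProduct.rid k A (TensorProduct.map LinearMap.id εC
        (doiHopfMap αA αC act ρ (c ⊗ₜ[k] a)))
      = εC c • a := by
  have h_counit (x : A ⊗[k] H) :
      TensorProduct.rid k A (TensorProduct.map αA.symm.toLinearMap
          (εC ∘ₗ act (αC.symm c)) x)
        = εC c • αA.symm (TensorProduct.rid k A (TensorProduct.map LinearMap.id εH x)) := by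
    induction x using TensorProduct.induction_on with
    | zero => simp
    | add u v hu hv => simp only [map_add, smul_add, hu, hv]
    | tmul a₀ g => simp [hC.2.2.2, hC.1.counit_symm, mul_smul]
  rw [doiHopfMap_tmul, TensorProduct.map_map, LinearMap.id_comp, h_counit, hρ.2.2,
    LinearEquiv.symm_apply_apply]

theorem doiHopfMap_unit (hA : IsHomComoduleAlgebra k αH μH eH ΔH εH αA μA eA ρ)
    (hact : IsHomModule k αH μH eH αC act) (c : C) :
    doiHopfMap αA αC act ρ (c ⊗ₜ[k] eA) = eA ⊗ₜ[k] c := by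
  simp [doiHopfMap_tmul, hA.2.2.2, hA.1.symm_unit, hact.2.1]

theorem isHomEntwining_doiHopfMap
    (hA : IsHomComoduleAlgebra k αH μH eH ΔH εH αA μA eA ρ)
    (hC : IsHomModuleCoalgebra k αH μH eH ΔH εH αC ΔC εC act) :
    IsHomEntwining k αA μA eA αC ΔC εC (doiHopfMap αA αC act ρ) := by
  refine ⟨TensorProduct.ext' ?_, TensorProduct.ext_threefold ?_, TensorProduct.ext' ?_,
    TensorProduct.ext' ?_, doiHopfMap_unit hA hC.2.1⟩
  · exact doiHopfMap_map_twist hA.2.1 hC.2.1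
  · exact doiHopfMap_mul hA hC.2.1
  · exact doiHopfMap_comul hA.2.1 hC
  · exact doiHopfMap_counit hA.2.1 hC

variable (αH ΔA εA ρ μC eC act) in
/-- Condition (i), the compatibility of the coaction on `A` and the action on `C` with the
comultiplication of `A` and the multiplication of `C`. The factor `αH²` of its right-hand side
is encoded as a restriction of the action. -/
def IsDoiHopfCompatible : Prop :=
  comulThenEntwine ΔA μC (coactThenAct act ρ)
      = entwineThenComul ΔA μC
          (coactThenAct (act.compl₂ (αH.toLinearMap ∘ₗ αH.toLinearMap)) ρ) ∧
    ∀ a, εA a • eC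
      = act eC (TensorProduct.lid k H (TensorProduct.map εA LinearMap.id (ρ a)))

theorem isDoiHopfCompatible_iff : IsDoiHopfCompatible αH ΔA εA ρ μC eC act ↔
    comulThenEntwine ΔA μC (coactThenAct act ρ)
        = TensorProduct.map ΔA (TensorProduct.lift act
            ∘ₗ TensorProduct.map LinearMap.id (αH.toLinearMap ∘ₗ αH.toLinearMap))
          ∘ₗ (TensorProduct.leftComm k C A H).toLinearMap
          ∘ₗ TensorProduct.map (TensorProduct.lift μC) ρ ∧
      ∀ a, εA a • eC
        = act eC (TensorProduct.lid k H (TensorProduct.map εA LinearMap.id (ρ a))) := by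
  have h_lift : TensorProduct.lift act
        ∘ₗ TensorProduct.map LinearMap.id (αH.toLinearMap ∘ₗ αH.toLinearMap)
      = TensorProduct.lift (act.compl₂ (αH.toLinearMap ∘ₗ αH.toLinearMap)) :=
    TensorProduct.ext' fun _ _ => rfl
  have h_rhs : entwineThenComul ΔA μC
        (coactThenAct (act.compl₂ (αH.toLinearMap ∘ₗ αH.toLinearMap)) ρ)
      = TensorProduct.map ΔA
          (TensorProduct.lift (act.compl₂ (αH.toLinearMap ∘ₗ αH.toLinearMap)))
        ∘ₗ (TensorProduct.leftComm k C A H).toLinearMap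
        ∘ₗ TensorProduct.map (TensorProduct.lift μC) ρ := by
    ext c d a
    simp [entwineThenComul, coactThenAct_tmul, map_lift_leftComm_tmul, TensorProduct.map_map]
  rw [h_lift, ← h_rhs, IsDoiHopfCompatible]

theorem isDoiHopfCompatible_compl₂_iff {δ : A ≃ₗ[k] A} {γ : H →ₗ[k] H}
    (hγ : ∀ h, γ (αH h) = αH (γ h))
    (hρ : ∀ a, ρ (δ a) = TensorProduct.map δ.toLinearMap γ (ρ a))
    (hΔ : ∀ a, ΔA (δ a) = TensorProduct.map δ.toLinearMap δ.toLinearMap (ΔA a))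
    (hε : ∀ a, εA (δ a) = εA a) :
    IsDoiHopfCompatible αH ΔA εA ρ μC eC (act.compl₂ γ)
      ↔ IsDoiHopfCompatible αH ΔA εA ρ μC eC act := by
  have h_lhs : comulThenEntwine ΔA μC (coactThenAct (act.compl₂ γ) ρ)
      = TensorProduct.map (TensorProduct.map δ.symm.toLinearMap δ.symm.toLinearMap)
          LinearMap.id
        ∘ₗ comulThenEntwine ΔA μC (coactThenAct act ρ)
        ∘ₗ TensorProduct.map LinearMap.id δ.toLinearMap := by
    rw [coactThenAct_compl₂ hρ, comulThenEntwine_conj hΔ, TensorProduct.map_id]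
  have h_commute : (act.compl₂ γ).compl₂ (αH.toLinearMap ∘ₗ αH.toLinearMap)
      = (act.compl₂ (αH.toLinearMap ∘ₗ αH.toLinearMap)).compl₂ γ := by
    ext c h
    simp [hγ]
  have h_counit (a : A) :
      act.compl₂ γ eC (TensorProduct.lid k H (TensorProduct.map εA LinearMap.id (ρ a)))
        = act eC (TensorProduct.lid k H (TensorProduct.map εA LinearMap.id (ρ (δ a)))) := by
    have h_counit_comp : εA ∘ₗ δ.toLinearMap = εA := LinearMap.ext hε
    rw [LinearMap.compl₂_apply, apply_lid_map, hρ, TensorProduct.map_map, h_counit_comp,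
      LinearMap.id_comp]
  refine and_congr ?_ (.trans (forall_congr' fun a => ?_) δ.surjective.forall.symm)
  · rw [h_lhs, h_commute, coactThenAct_compl₂ hρ,
      entwineThenComul_conj (comp_symm_eq_map_symm_comp hΔ)]
    exact comp_comp_inj
      (TensorProduct.map_bijective
        (TensorProduct.map_bijective δ.symm.bijective δ.symm.bijective) Function.bijective_id).1
      (TensorProduct.map_bijective Function.bijective_id δ.bijective).2
  · rw [h_counit, hε]

theorem map_comp_doiHopfMap_comp_map_lift (hC : IsHomAlgebra k αC μC eC)
    (hact : IsHomModule k αH μH eH αC act) (hA : IsHomCoalgebra k αA ΔA εA) :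
    TensorProduct.map ΔA (αC.toLinearMap ∘ₗ αC.toLinearMap) ∘ₗ doiHopfMap αA αC act ρ
        ∘ₗ TensorProduct.map (TensorProduct.lift μC) LinearMap.id
      = TensorProduct.map (TensorProduct.map αA.symm.toLinearMap αA.symm.toLinearMap)
          LinearMap.id
        ∘ₗ entwineThenComul ΔA μC
          (coactThenAct (act.compl₂ (αH.toLinearMap ∘ₗ αH.toLinearMap)) ρ)
        ∘ₗ TensorProduct.map (TensorProduct.map αC.toLinearMap αC.toLinearMap)
          LinearMap.id := by
  have h_act (c : C) : (αC.toLinearMap ∘ₗ αC.toLinearMap) ∘ₗ act (αC.symm c)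
      = act.compl₂ (αH.toLinearMap ∘ₗ αH.toLinearMap) (αC c) := by
    ext g
    simp [hact.1]
  ext c d a
  simp [-LinearEquiv.comp_coe, doiHopfMap_tmul, coactThenAct_tmul, TensorProduct.map_map,
    entwineThenComul, comp_symm_eq_map_symm_comp hA.1, h_act, hC.1]

theorem doiHopfMap_counit_left (hA : IsHomCoalgebra k αA ΔA εA)
    (hC : IsHomAlgebra k αC μC eC) (a : A) :
    TensorProduct.lid k C
        (TensorProduct.map εA LinearMap.id (doiHopfMap αA αC act ρ (eC ⊗ₜ[k] a)))
      = act eC (TensorProduct.lid k H (TensorProduct.map εA LinearMap.id (ρ a))) := by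
  have h_counit : εA ∘ₗ αA.symm.toLinearMap = εA := LinearMap.ext hA.counit_symm
  rw [doiHopfMap_tmul, hC.symm_unit, TensorProduct.map_map, h_counit, LinearMap.id_comp,
    apply_lid_map]

theorem isHomMonoidalEntwining_doiHopfMap_iff
    (hA : IsHomComoduleAlgebra k αH μH eH ΔH εH αA μA eA ρ) (hAco : IsHomCoalgebra k αA ΔA εA)
    (hC : IsHomModuleCoalgebra k αH μH eH ΔH εH αC ΔC εC act)
    (hCalg : IsHomAlgebra k αC μC eC) :
    IsHomMonoidalEntwining k αA μA eA ΔA εA αC μC eC ΔC εC (doiHopfMap αA αC act ρ)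
      ↔ IsDoiHopfCompatible αH ΔA εA ρ μC eC act := by
  rw [IsHomMonoidalEntwining, and_iff_right (isHomEntwining_doiHopfMap hA hC)]
  refine and_congr ?_ (forall_congr' fun a => ?_)
  · rw [← comulThenEntwine_comp_map, comulThenEntwine_doiHopfMap,
      map_comp_doiHopfMap_comp_map_lift hCalg hC.2.1 hAco]
    exact comp_comp_inj
      (TensorProduct.map_bijective
        (TensorProduct.map_bijective αA.symm.bijective αA.symm.bijective)
        Function.bijective_id).1
      (TensorProduct.map_bijective
        (TensorProduct.map_bijective αC.bijective αC.bijective) Function.bijective_id).2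
  · rw [doiHopfMap_counit_left hAco hCalg, eq_comm]

theorem doiHopf_monoidal_iff_general (hH : IsHomBialgebra k αH μH eH ΔH εH)
    (hA : IsHomComoduleAlgebra k αH μH eH ΔH εH αA μA eA ρ) (hAco : IsHomCoalgebra k αA ΔA εA)
    (hC : IsHomModuleCoalgebra k αH μH eH ΔH εH αC ΔC εC act)
    (hCalg : IsHomAlgebra k αC μC eC) (m : ℤ) :
    IsDoiHopfCompatible αH ΔA εA ρ μC eC act
      ↔ IsHomMonoidalEntwining k αA μA eA ΔA εA αC μC eC ΔC εC
        (doiHopfMap αA αC (act.compl₂ (αH ^ m).toLinearMap) ρ) := by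
  have h_pow := hH.isHomBialgebraHom_zpow m
  rw [isHomMonoidalEntwining_doiHopfMap_iff hA hAco (hC.compl₂ h_pow) hCalg]
  exact (isDoiHopfCompatible_compl₂_iff h_pow.map_twist (hA.2.1.coact_zpow m)
    (hAco.comul_zpow m) (hAco.counit_zpow m)).symm

end DoiHopf

/-- with `A` a right `H`-comodule algebra which is a
Hom-bialgebra and `C` a right `H`-module coalgebra which is a Hom-bialgebra,
the compatibility conditions (i) hold iff `(C, A, Φ)` is a Hom-monoidal
entwining datum. -/
theorem doiHopf_monoidal_iff
    {A C H : Type*} [AddCommGroup A] [Module k A] [AddCommGroup C] [Module k C]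
    [AddCommGroup H] [Module k H]
    (αH : H ≃ₗ[k] H) (μH : H →ₗ[k] H →ₗ[k] H) (eH : H)
    (ΔH : H →ₗ[k] H ⊗[k] H) (εH : H →ₗ[k] k)
    (hH : IsHomBialgebra k αH μH eH ΔH εH)
    (αA : A ≃ₗ[k] A) (μA : A →ₗ[k] A →ₗ[k] A) (eA : A)
    (ΔA : A →ₗ[k] A ⊗[k] A) (εA : A →ₗ[k] k) (ρA : A →ₗ[k] A ⊗[k] H)
    (hA : IsHomComoduleAlgebra k αH μH eH ΔH εH αA μA eA ρA)
    (hAbi : IsHomBialgebra k αA μA eA ΔA εA)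
    (αC : C ≃ₗ[k] C) (μC : C →ₗ[k] C →ₗ[k] C) (eC : C)
    (ΔC : C →ₗ[k] C ⊗[k] C) (εC : C →ₗ[k] k) (actC : C →ₗ[k] H →ₗ[k] C)
    (hC : IsHomModuleCoalgebra k αH μH eH ΔH εH αC ΔC εC actC)
    (hCbi : IsHomBialgebra k αC μC eC ΔC εC) (m : ℤ) :
    ((TensorProduct.map (LinearMap.id : A ⊗[k] A →ₗ[k] A ⊗[k] A)
          (TensorProduct.lift μC)
        ∘ₗ (TensorProduct.tensorTensorTensorComm k A C A C).toLinearMap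
        ∘ₗ TensorProduct.map
            (TensorProduct.map (LinearMap.id : A →ₗ[k] A) (TensorProduct.lift actC)
              ∘ₗ (TensorProduct.leftComm k C A H).toLinearMap
              ∘ₗ TensorProduct.map (LinearMap.id : C →ₗ[k] C) ρA)
            (TensorProduct.map (LinearMap.id : A →ₗ[k] A) (TensorProduct.lift actC)
              ∘ₗ (TensorProduct.leftComm k C A H).toLinearMap
              ∘ₗ TensorProduct.map (LinearMap.id : C →ₗ[k] C) ρA)
        ∘ₗ (TensorProduct.tensorTensorTensorComm k C C A A).toLinearMap
        ∘ₗ TensorProduct.map (LinearMap.id : C ⊗[k] C →ₗ[k] C ⊗[k] C) ΔA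
      = TensorProduct.map ΔA
            (TensorProduct.lift actC ∘ₗ
              TensorProduct.map (LinearMap.id : C →ₗ[k] C)
                (αH.toLinearMap ∘ₗ αH.toLinearMap))
          ∘ₗ (TensorProduct.leftComm k C A H).toLinearMap
          ∘ₗ TensorProduct.map (TensorProduct.lift μC) ρA) ∧
      (∀ a, εA a • eC
        = actC eC ((TensorProduct.lid k H)
            (TensorProduct.map εA (LinearMap.id : H →ₗ[k] H) (ρA a))))) ↔
    IsHomMonoidalEntwining k αA μA eA ΔA εA αC μC eC ΔC εC
      (TensorProduct.map αA.symm.toLinearMap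
          (TensorProduct.lift actC ∘ₗ
            TensorProduct.map αC.symm.toLinearMap ((αH ^ m).toLinearMap))
        ∘ₗ (TensorProduct.leftComm k C A H).toLinearMap
        ∘ₗ TensorProduct.map (LinearMap.id : C →ₗ[k] C) ρA) := by
  rw [← doiHopfMap_compl₂, ← doiHopf_monoidal_iff_general hH hA hAbi.2.1 hC hCbi.1 m]
  exact isDoiHopfCompatible_iff.symm
end
end

section
/- Let (H, α_H) be a Hom-bialgebra over a field k, let i, j, m ∈ ℤ, and let (U,α_U), (V,α_V), (W,α_W) be Hom-Long dimodules over H. Define ξ_{X,Y} : X⊗Y → X⊗Y by ξ_{X,Y}(x⊗y) = α_X^{-1}(x)·α_H^{m}(y₍₁₎) ⊗ α_Y^{-1}(y₍₀₎) for Hom-Long dimodules X,Y (where ρ(y) = y₍₀₎⊗y₍₁₎), and define the associativity constraint a_{X,Y,Z} : (X⊗Y)⊗Z → X⊗(Y⊗Z) by a_{X,Y,Z}((x⊗y)⊗z) = α_X^{i+1}(x) ⊗ (y ⊗ α_Z^{-j-1}(z)). Then the following generalized Hom-type D-equation holds as an equality of linear maps (U⊗V)⊗W → (U⊗V)⊗W: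 (ξ_{U,V}⊗id_W) ∘ a_{U,V,W}^{-1} ∘ (id_U⊗ξ_{V,W}) ∘ a_{U,V,W} = a_{U,V,W}^{-1} ∘ (id_U⊗ξ_{V,W}) ∘ a_{U,V,W} ∘ (ξ_{U,V}⊗id_W). -/
open TensorProduct BigOperators

noncomputable section

variable (k : Type*) [Field k]

/-!
Undoing the twist by `α` turns a Hom-Long dimodule `V` into an untwisted one: the endomorphisms
`φ_h v = α⁻¹(v)·h` commute with the map `σ v = α⁻¹(v₍₀₎) ⊗ v₍₁₎`, in the sense that
`σ ∘ φ_h = (φ_h ⊗ id) ∘ σ`. In these terms `ξ(x ⊗ y) = φ_{α^m(y₍₁₎)} x ⊗ y₍₀₎`, with `σ` as the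
coaction, and the powers of `α` in the associativity constraint only conjugate the coaction of `W`.
Hence, up to the associativity constraint, `ξ_{V,W}` touches `V` only through the `φ_h`, while
`ξ_{U,V}` touches it only through `σ`, so the two operators commute.
-/

section LongOperator

variable {R H U V W X X' Y Y' : Type*} [CommSemiring R]
variable [AddCommMonoid H] [Module R H] [AddCommMonoid U] [Module R U]
variable [AddCommMonoid V] [Module R V] [AddCommMonoid W] [Module R W]
variable [AddCommMonoid X] [Module R X] [AddCommMonoid X'] [Module R X']
variable [AddCommMonoid Y] [Module R Y] [AddCommMonoid Y'] [Module R Y']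

/-- The operator `x ⊗ y ↦ φ(y₍₁₎) x ⊗ y₍₀₎` on `X ⊗ Y` attached to a family `φ` of endomorphisms of
`X` and a map `σ : Y → Y ⊗ H`, `σ y = y₍₀₎ ⊗ y₍₁₎`, neither of which has to satisfy any (co)action
axioms. -/
def longOperator (φ : H →ₗ[R] Module.End R X) (σ : Y →ₗ[R] Y ⊗[R] H) :
    X ⊗[R] Y →ₗ[R] X ⊗[R] Y :=
  TensorProduct.lift ((LinearMap.rTensorHom Y ∘ₗ φ.flip).compl₂
    ((TensorProduct.comm R Y H).toLinearMap ∘ₗ σ))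

theorem longOperator_tmul (φ : H →ₗ[R] Module.End R X) (σ : Y →ₗ[R] Y ⊗[R] H) (x : X) (y : Y) :
    longOperator φ σ (x ⊗ₜ y) = (φ.flip x).rTensor Y (TensorProduct.comm R Y H (σ y)) :=
  rfl

theorem rTensor_comp_longOperator {φ : H →ₗ[R] Module.End R X} {φ' : H →ₗ[R] Module.End R X'}
    (σ : Y →ₗ[R] Y ⊗[R] H) {f : X →ₗ[R] X'} (hf : ∀ h, f ∘ₗ φ h = φ' h ∘ₗ f) :
    f.rTensor Y ∘ₗ longOperator φ σ = longOperator φ' σ ∘ₗ f.rTensor Y := by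
  ext x y
  have hfx : f ∘ₗ φ.flip x = φ'.flip (f x) := LinearMap.ext fun h ↦ LinearMap.congr_fun (hf h) x
  simp [longOperator_tmul, ← hfx, LinearMap.rTensor_comp_apply]

theorem lTensor_comp_longOperator (φ : H →ₗ[R] Module.End R X) {σ : Y →ₗ[R] Y ⊗[R] H}
    {σ' : Y' →ₗ[R] Y' ⊗[R] H} {f : Y →ₗ[R] Y'} (hf : f.rTensor H ∘ₗ σ = σ' ∘ₗ f) :
    f.lTensor X ∘ₗ longOperator φ σ = longOperator φ σ' ∘ₗ f.lTensor X := by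
  ext x y
  have hfy : f.rTensor H (σ y) = σ' (f y) := LinearMap.congr_fun hf y
  have natural (t : Y ⊗[R] H) :
      f.lTensor X ((φ.flip x).rTensor Y (TensorProduct.comm R Y H t)) =
        (φ.flip x).rTensor Y' (TensorProduct.comm R Y' H (f.rTensor H t)) := by
    induction t <;> simp_all
  simp [longOperator_tmul, ← hfy, natural]

theorem lTensor_longOperator_comp_assoc (φ : H →ₗ[R] Module.End R V) (σ : W →ₗ[R] W ⊗[R] H) :
    (longOperator φ σ).lTensor U ∘ₗ (TensorProduct.assoc R U V W).toLinearMap =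
      (TensorProduct.assoc R U V W).toLinearMap ∘ₗ
        longOperator (LinearMap.lTensorHom U ∘ₗ φ) σ := by
  ext u v w
  have assoc_rTensor (t : H ⊗[R] W) :
      TensorProduct.assoc R U V W
          (((LinearMap.lTensorHom U ∘ₗ φ).flip (u ⊗ₜ v)).rTensor W t) =
        u ⊗ₜ (φ.flip v).rTensor W t := by
    induction t <;> simp_all [TensorProduct.tmul_add]
  simp [longOperator_tmul, assoc_rTensor]

theorem longOperator_D_equation (φU : H →ₗ[R] Module.End R U) {φV : H →ₗ[R] Module.End R V}
    {σV : V →ₗ[R] V ⊗[R] H} (σW : W →ₗ[R] W ⊗[R] H)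
    (hV : ∀ h, (φV h).rTensor H ∘ₗ σV = σV ∘ₗ φV h) :
    (longOperator φU σV).rTensor W ∘ₗ longOperator (LinearMap.lTensorHom U ∘ₗ φV) σW =
      longOperator (LinearMap.lTensorHom U ∘ₗ φV) σW ∘ₗ (longOperator φU σV).rTensor W :=
  rTensor_comp_longOperator σW fun h ↦ (lTensor_comp_longOperator φU (hV h)).symm

end LongOperator

section Untwisting

variable {R H X Y : Type*} [CommSemiring R] [AddCommMonoid H] [Module R H]
variable [AddCommMonoid X] [Module R X] [AddCommMonoid Y] [Module R Y]

/-- The endomorphisms `x ↦ α⁻¹(x)·h` of a Hom-module, in which the twist of the action by `α` is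
undone. -/
def untwistedAction (α : X ≃ₗ[R] X) (act : X →ₗ[R] H →ₗ[R] X) : H →ₗ[R] Module.End R X :=
  (act ∘ₗ α.symm.toLinearMap).flip

/-- The map `y ↦ α⁻¹(y₍₀₎) ⊗ y₍₁₎` on a Hom-comodule, in which the twist of the coaction by `α` is
undone. -/
def untwistedCoaction (α : Y ≃ₗ[R] Y) (ρ : Y →ₗ[R] Y ⊗[R] H) : Y →ₗ[R] Y ⊗[R] H :=
  α.symm.toLinearMap.rTensor H ∘ₗ ρ

theorem rTensor_untwistedAction_comp_untwistedCoaction {αH : H ≃ₗ[R] H} {α : X ≃ₗ[R] X}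
    {act : X →ₗ[R] H →ₗ[R] X} {ρ : X →ₗ[R] X ⊗[R] H}
    (hact : ∀ x h, α (act x h) = act (α x) (αH h))
    (hρ : ∀ x, ρ (α x) = TensorProduct.map α.toLinearMap αH.toLinearMap (ρ x))
    (hlong : ∀ x h, ρ (act x h) = TensorProduct.map (act.flip (αH h)) αH.toLinearMap (ρ x))
    (h : H) :
    (untwistedAction α act h).rTensor H ∘ₗ untwistedCoaction α ρ =
      untwistedCoaction α ρ ∘ₗ untwistedAction α act h := by
  have symm_act (x : X) : α.symm (act x (αH h)) = act (α.symm x) h := by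
    rw [LinearEquiv.symm_apply_eq, hact, LinearEquiv.apply_symm_apply]
  ext x
  obtain ⟨x, rfl⟩ := α.surjective x
  simp only [untwistedAction, untwistedCoaction, LinearMap.comp_apply, LinearMap.flip_apply,
    LinearEquiv.coe_coe, LinearEquiv.symm_apply_apply, hρ, hlong]
  induction ρ x <;> simp_all

end Untwisting

section HomLong

variable {k} {H U V W X Y : Type*} [AddCommGroup H] [Module k H]
variable [AddCommGroup U] [Module k U] [AddCommGroup V] [Module k V]
variable [AddCommGroup W] [Module k W] [AddCommGroup X] [Module k X]
variable [AddCommGroup Y] [Module k Y]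

theorem longXi_eq_longOperator (m : ℤ) (αH : H ≃ₗ[k] H) (αX : X ≃ₗ[k] X) (αY : Y ≃ₗ[k] Y)
    (act : X →ₗ[k] H →ₗ[k] X) (ρ : Y →ₗ[k] Y ⊗[k] H) :
    longXi k m αH αX αY act ρ =
      longOperator (untwistedAction αX act ∘ₗ (αH ^ m).toLinearMap) (untwistedCoaction αY ρ) := by
  ext x y
  simp only [longXi, untwistedCoaction, longOperator_tmul,
    TensorProduct.AlgebraTensorModule.curry_apply, LinearMap.restrictScalars_self,
    TensorProduct.curry_apply, LinearMap.comp_apply, TensorProduct.map_tmul]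
  induction ρ y <;> simp_all [TensorProduct.tmul_add, untwistedAction]

theorem homAssoc_conj_longOperator (i j : ℤ) (αU : U ≃ₗ[k] U) (αW : W ≃ₗ[k] W)
    (φ : H →ₗ[k] Module.End k V) (σ : W →ₗ[k] W ⊗[k] H) :
    (homAssoc k i j αU αW).symm.toLinearMap ∘ₗ (longOperator φ σ).lTensor U ∘ₗ
        (homAssoc k i j αU αW).toLinearMap =
      longOperator (LinearMap.lTensorHom U ∘ₗ φ)
        ((αW ^ (-j - 1)).symm.toLinearMap.rTensor H ∘ₗ σ ∘ₗ (αW ^ (-j - 1)).toLinearMap) := by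
  set β := αW ^ (-j - 1)
  set σβ := β.symm.toLinearMap.rTensor H ∘ₗ σ ∘ₗ β.toLinearMap
  have hσβ : β.toLinearMap.rTensor H ∘ₗ σβ = σ ∘ₗ β.toLinearMap := by
    simp [σβ, ← LinearMap.comp_assoc, ← LinearMap.rTensor_comp]
  have homAssoc_eq : (homAssoc k i j (Y := V) αU αW).toLinearMap =
      TensorProduct.map (αU ^ (i + 1)).toLinearMap (β.toLinearMap.lTensor V) ∘ₗ
        (TensorProduct.assoc k U V W).toLinearMap :=
    rfl
  have intertwine : (longOperator φ σ).lTensor U ∘ₗ (homAssoc k i j αU αW).toLinearMap =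
      (homAssoc k i j αU αW).toLinearMap ∘ₗ longOperator (LinearMap.lTensorHom U ∘ₗ φ) σβ := by
    rw [homAssoc_eq, LinearMap.comp_assoc, ← lTensor_longOperator_comp_assoc,
      ← LinearMap.comp_assoc, ← LinearMap.comp_assoc, LinearMap.lTensor_comp_map,
      LinearMap.map_comp_lTensor, lTensor_comp_longOperator φ hσβ]
  rw [intertwine, ← LinearMap.comp_assoc, LinearEquiv.comp_coe, LinearEquiv.self_trans_symm,
    LinearEquiv.refl_toLinearMap, LinearMap.id_comp]

theorem IsHomLongDimodule.coaction_act {αH : H ≃ₗ[k] H} {μ : H →ₗ[k] H →ₗ[k] H} {e : H}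
    {Δ : H →ₗ[k] H ⊗[k] H} {ε : H →ₗ[k] k} {α : X ≃ₗ[k] X} {act : X →ₗ[k] H →ₗ[k] X}
    {ρ : X →ₗ[k] X ⊗[k] H} (hX : IsHomLongDimodule k αH μ e Δ ε α act ρ) (x : X) (h : H) :
    ρ (act x h) = TensorProduct.map (act.flip (αH h)) αH.toLinearMap (ρ x) := by
  rw [hX.2.2]
  induction ρ x <;> simp_all [TensorProduct.add_tmul]

theorem homLong_D_equation_general (i j m : ℤ) (αH : H ≃ₗ[k] H)
    (αU : U ≃ₗ[k] U) (actU : U →ₗ[k] H →ₗ[k] U)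
    {αV : V ≃ₗ[k] V} {actV : V →ₗ[k] H →ₗ[k] V} {ρV : V →ₗ[k] V ⊗[k] H}
    (map_act : ∀ v h, αV (actV v h) = actV (αV v) (αH h))
    (coaction_map : ∀ v, ρV (αV v) = TensorProduct.map αV.toLinearMap αH.toLinearMap (ρV v))
    (coaction_act : ∀ v h,
      ρV (actV v h) = TensorProduct.map (actV.flip (αH h)) αH.toLinearMap (ρV v))
    (αW : W ≃ₗ[k] W) (ρW : W →ₗ[k] W ⊗[k] H) :
    (longXi k m αH αU αV actU ρV).rTensor W
        ∘ₗ (homAssoc k i j αU αW).symm.toLinearMap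
        ∘ₗ (longXi k m αH αV αW actV ρW).lTensor U
        ∘ₗ (homAssoc k i j αU αW).toLinearMap
      = (homAssoc k i j αU αW).symm.toLinearMap
        ∘ₗ (longXi k m αH αV αW actV ρW).lTensor U
        ∘ₗ (homAssoc k i j αU αW).toLinearMap
        ∘ₗ (longXi k m αH αU αV actU ρV).rTensor W := by
  let φU := untwistedAction αU actU ∘ₗ (αH ^ m).toLinearMap
  let φV := untwistedAction αV actV ∘ₗ (αH ^ m).toLinearMap
  let σV := untwistedCoaction αV ρV
  have commute (h : H) : (φV h).rTensor H ∘ₗ σV = σV ∘ₗ φV h :=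
    rTensor_untwistedAction_comp_untwistedCoaction map_act coaction_map coaction_act ((αH ^ m) h)
  have conj := homAssoc_conj_longOperator i j αU αW φV (untwistedCoaction αW ρW)
  have D_equation := longOperator_D_equation φU
    ((αW ^ (-j - 1)).symm.toLinearMap.rTensor H ∘ₗ untwistedCoaction αW ρW ∘ₗ
      (αW ^ (-j - 1)).toLinearMap) commute
  rw [← conj] at D_equation
  simpa only [longXi_eq_longOperator, LinearMap.comp_assoc] using D_equation

end HomLong

/-- the generalized Hom-type D-equation for the maps `ξ` on
Hom-Long dimodules. -/
theorem homLong_D_equation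
    {H U V W : Type*} [AddCommGroup H] [Module k H] [AddCommGroup U] [Module k U]
    [AddCommGroup V] [Module k V] [AddCommGroup W] [Module k W]
    (αH : H ≃ₗ[k] H) (μ : H →ₗ[k] H →ₗ[k] H) (e : H)
    (Δ : H →ₗ[k] H ⊗[k] H) (ε : H →ₗ[k] k)
    (hH : IsHomBialgebra k αH μ e Δ ε) (i j m : ℤ)
    (αU : U ≃ₗ[k] U) (actU : U →ₗ[k] H →ₗ[k] U) (ρU : U →ₗ[k] U ⊗[k] H)
    (hU : IsHomLongDimodule k αH μ e Δ ε αU actU ρU)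
    (αV : V ≃ₗ[k] V) (actV : V →ₗ[k] H →ₗ[k] V) (ρV : V →ₗ[k] V ⊗[k] H)
    (hV : IsHomLongDimodule k αH μ e Δ ε αV actV ρV)
    (αW : W ≃ₗ[k] W) (actW : W →ₗ[k] H →ₗ[k] W) (ρW : W →ₗ[k] W ⊗[k] H)
    (hW : IsHomLongDimodule k αH μ e Δ ε αW actW ρW) :
    TensorProduct.map (longXi k m αH αU αV actU ρV) (LinearMap.id : W →ₗ[k] W)
        ∘ₗ (homAssoc k i j (Y := V) αU αW).symm.toLinearMap
        ∘ₗ TensorProduct.map (LinearMap.id : U →ₗ[k] U) (longXi k m αH αV αW actV ρW)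
        ∘ₗ (homAssoc k i j (Y := V) αU αW).toLinearMap
      = (homAssoc k i j (Y := V) αU αW).symm.toLinearMap
        ∘ₗ TensorProduct.map (LinearMap.id : U →ₗ[k] U) (longXi k m αH αV αW actV ρW)
        ∘ₗ (homAssoc k i j (Y := V) αU αW).toLinearMap
        ∘ₗ TensorProduct.map (longXi k m αH αU αV actU ρV) (LinearMap.id : W →ₗ[k] W) := by
  exact homLong_D_equation_general i j m αH αU actU hV.1.1 hV.2.1.1 hV.coaction_act αW ρW
end
end
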